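/- arXiv:2411.10555 — 8 statements merged into one kernel-verified Lean document; each statement's English description precedes it below -/
import Mathlib

section
/- Let p ≥ 1 and for each i = 1,…,p let X_i be a nonempty closed convex subset of ℝ^{n_i}; set X = X_1 × ⋯ × X_p ⊆ ℝ^n with n = n_1 + ⋯ + n_p. Let f : ℝ^n → ℝ be continuously differentiable with block-coordinatewise Lipschitz gradient: for each i there is L_i > 0 such that ‖∇_i f(x + U_i h_i) − ∇_i f(x)‖ ≤ L_i ‖h_i‖ for all x ∈ ℝ^n and all h_i ∈ ℝ^{n_i}, where U_i : ℝ^{n_i} → ℝ^n is the canonical block embedding and ∇_i f = U_iᵀ ∇f; set L = max_i L_i. Let h : X → ℝ be continuous and α-strongly convex for some α > 0, decomposing as h(x) = Σ_{i=1}^p h_i(x(i)), and let ω be a continuously differentiable distance generating function on X with modulus α (i.e. ⟨x − z, ∇ω(x) − ∇ω(z)⟩ ≥ α‖x − z‖² for all x, z ∈ X) whose Bregman prox-function V(x,z) = ω(x) − ω(z) − ⟨∇ω(z), x − z⟩ decomposes as V(x,z) = Σ_{i=1}^p V_i(x(i), z(i)). Set Φ = f + h, Φ* = min_{x ∈ X}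 Φ(x), and D = ((Φ(x_0) − Φ*)/L)^{1/2}. Starting from x_0 ∈ X, run coordinate mirror descent with stepsizes γ_{k,i} = α/L: for k = 0,…,N−1 and i = 1,…,p, the i-th block is updated by x_k^i(i) = argmin_{u_i ∈ X_i} [⟨∇_i f(x_k^{i−1}), u_i⟩ + (1/γ_{k,i}) V_i(u_i, x_k^{i−1}(i)) + h_i(u_i)] while x_k^i(j) = x_k^{i−1}(j) for j ≠ i, and x_{k+1}^0 = x_k^p. Define g_{X,k,i} = (x_k^{i−1}(i) − x_k^i(i))/γ_{k,i} and the convergence criterion Δ(x_k, x_{k−1}) = Σ_{i=1}^p ‖g_{X,k,i}‖². Then min_{1 ≤ k ≤ N} Δ(x_k, x_{k−1}) ≤ 2 D² L² / (N α²). -/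
open scoped RealInnerProductSpace

/-- The ambient product space `ℝ^{n_1} × ⋯ × ℝ^{n_p}` with the Euclidean (ℓ²) norm. -/
noncomputable abbrev BlockSpace (p : ℕ) (n : Fin p → ℕ) :=
  PiLp 2 (fun i : Fin p => EuclideanSpace ℝ (Fin (n i)))

/-- `blockGrad f i x = ∇_i f(x)`, the gradient of `f` with respect to the `i`-th block of
variables, evaluated at `x`. -/
noncomputable def blockGrad {p : ℕ} {n : Fin p → ℕ}
    (f : BlockSpace p n → ℝ) (i : Fin p) (x : BlockSpace p n) :
    EuclideanSpace ℝ (Fin (n i)) :=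
  gradient (fun u => f (WithLp.toLp 2 (Function.update x i u))) (x i)

/-!
A mirror step from `a` to `b` in a single block is a proximal gradient step in the Bregman geometry
of `ω`. First-order optimality of `b` and strong monotonicity of `∇ω` give
`(α / γ) ‖a - b‖² ≤ ⟪∇f a, a - b⟫ + h a - h b`, the descent lemma bounds the loss of linearizing `f`
by `(L / 2) ‖a - b‖²`, and so `f + h` drops by at least `(α / γ - L / 2) ‖a - b‖²`. Freezing all
blocks but one turns a coordinate step into such a single-block step, because the separable terms
change by constants only. Telescoping over blocks and sweeps bounds the total of the squared steps
by the initial gap, and the smallest of `N` sweeps is at most their average.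
-/

section HilbertSpace

variable {E : Type*} [NormedAddCommGroup E] [InnerProductSpace ℝ E] [CompleteSpace E]

/-- The Bregman prox-function `V(x, z) = ω(x) - ω(z) - ⟪∇ω(z), x - z⟫` generated by `ω`. -/
noncomputable def bregman (ω : E → ℝ) (x z : E) : ℝ :=
  ω x - ω z - ⟪gradient ω z, x - z⟫

theorem hasGradientAt_bregman_left {ω : E → ℝ} {x : E} (hω : DifferentiableAt ℝ ω x) (z : E) :
    HasGradientAt (fun u => bregman ω u z) (gradient ω x - gradient ω z) x := by
  rw [hasGradientAt_iff_hasFDerivAt, map_sub]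
  have hlin : HasFDerivAt (fun u => ⟪gradient ω z, u - z⟫)
      (InnerProductSpace.toDual ℝ E (gradient ω z)) x := by
    exact (InnerProductSpace.toDual ℝ E (gradient ω z)).hasFDerivAt.comp x
      ((hasFDerivAt_id x).sub_const z)
  exact (hω.hasGradientAt.hasFDerivAt.sub_const (ω z)).sub hlin

/-- The function `u ↦ ⟪g, u⟫ + V(u, a) / γ + h(u)` minimized by a mirror descent step from `a` in
direction `g` with stepsize `γ`. The prox-function `V` is arbitrary, so that both Bregman
prox-functions and the blocks of a decomposable one are covered. -/
noncomputable def mirrorModel (V : E → E → ℝ) (h : E → ℝ) (g : E) (γ : ℝ) (a u : E) : ℝ :=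
  ⟪g, u⟫ + (1 / γ) * V u a + h u

theorem le_add_inner_gradient_add_of_norm_gradient_sub_le {C : Set E} {f : E → ℝ} {a b : E} {L : ℝ}
    (hC : StarConvex ℝ a C) (hb : b ∈ C) (hf : ∀ u ∈ C, DifferentiableAt ℝ f u)
    (hL : ∀ u ∈ C, ‖gradient f u - gradient f a‖ ≤ L * ‖u - a‖) :
    f b ≤ f a + ⟪gradient f a, b - a⟫ + L / 2 * ‖b - a‖ ^ 2 := by
  set d := b - a
  have hmem : ∀ t ∈ Set.Icc (0 : ℝ) 1, a + t • d ∈ C := fun t ht =>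
    hC.add_smul_sub_mem hb ht.1 ht.2
  have hline : ∀ t ∈ Set.Icc (0 : ℝ) 1,
      HasDerivAt (fun t : ℝ => f (a + t • d)) ⟪gradient f (a + t • d), d⟫ t := by
    intro t ht
    have hsegment : HasDerivAt (fun t : ℝ => a + t • d) d t := by
      simpa using ((hasDerivAt_id t).smul_const d).const_add a
    exact (hf _ (hmem t ht)).hasGradientAt.hasFDerivAt.comp_hasDerivAt t hsegment
  have hquad : ∀ t : ℝ,
      HasDerivAt (fun t : ℝ => f a + t * ⟪gradient f a, d⟫ + L / 2 * ‖d‖ ^ 2 * t ^ 2)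
        (⟪gradient f a, d⟫ + L / 2 * ‖d‖ ^ 2 * (2 * t)) t := by
    intro t
    have hlin : HasDerivAt (fun t : ℝ => f a + t * ⟪gradient f a, d⟫) ⟪gradient f a, d⟫ t := by
      simpa using ((hasDerivAt_id t).mul_const ⟪gradient f a, d⟫).const_add (f a)
    have hsq : HasDerivAt (fun t : ℝ => t ^ 2) (2 * t) t := by simpa using hasDerivAt_pow 2 t
    exact hlin.add (hsq.const_mul (L / 2 * ‖d‖ ^ 2))
  have hslope : ∀ t ∈ Set.Icc (0 : ℝ) 1,
      ⟪gradient f (a + t • d), d⟫ ≤ ⟪gradient f a, d⟫ + L / 2 * ‖d‖ ^ 2 * (2 * t) := by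
    intro t ht
    have hgrad : ‖gradient f (a + t • d) - gradient f a‖ ≤ L * (t * ‖d‖) := by
      simpa [norm_smul, abs_of_nonneg ht.1] using hL _ (hmem t ht)
    have hinner : ⟪gradient f (a + t • d) - gradient f a, d⟫ ≤ L * (t * ‖d‖) * ‖d‖ :=
      (real_inner_le_norm _ _).trans (by gcongr)
    rw [inner_sub_left] at hinner
    linarith
  have hend := image_le_of_deriv_right_le_deriv_boundary
    (fun t ht => (hline t ht).continuousAt.continuousWithinAt)
    (fun t ht => (hline t (Set.Ico_subset_Icc_self ht)).hasDerivWithinAt) (by simp)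
    (fun t _ => (hquad t).continuousAt.continuousWithinAt)
    (fun t _ => (hquad t).hasDerivWithinAt)
    (fun t ht => hslope t (Set.Ico_subset_Icc_self ht)) (Set.right_mem_Icc.2 zero_le_one)
  simpa [d] using hend

end HilbertSpace

theorem fderiv_sub_add_sub_nonneg_of_isMinOn {E : Type*} [NormedAddCommGroup E] [NormedSpace ℝ E]
    {C : Set E} {G H : E → ℝ} {G' : E →L[ℝ] ℝ} {a b : E} (hH : ConvexOn ℝ C H)
    (hG : HasFDerivWithinAt G G' C b) (ha : a ∈ C) (hb : b ∈ C)
    (hmin : IsMinOn (fun u => G u + H u) C b) : 0 ≤ G' (a - b) + (H a - H b) := by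
  set d := a - b
  have hmem : Set.MapsTo (fun t : ℝ => b + t • d) (Set.Icc 0 1) C := fun t ht =>
    hH.1.add_smul_sub_mem hb ha ht
  -- `H` need not be differentiable; its chord dominates it and keeps `0` a minimizer.
  set q : ℝ → ℝ := fun t => G (b + t • d) + t * (H a - H b)
  have hq : HasDerivWithinAt q (G' d + (H a - H b)) (Set.Icc 0 1) 0 := by
    have hline : HasDerivWithinAt (fun t : ℝ => b + t • d) d (Set.Icc 0 1) 0 := by
      simpa using ((hasDerivWithinAt_id (0 : ℝ) _).smul_const d).const_add b
    have hG₀ : HasFDerivWithinAt G G' C (b + (0 : ℝ) • d) := by simpa using hG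
    have hchord : HasDerivWithinAt (fun t : ℝ => t * (H a - H b)) (H a - H b) (Set.Icc 0 1) 0 := by
      simpa using (hasDerivWithinAt_id (0 : ℝ) _).mul_const (H a - H b)
    exact (hG₀.comp_hasDerivWithinAt 0 hline hmem).add hchord
  have hqmin : IsMinOn q (Set.Icc 0 1) 0 := by
    intro t ht
    have hchord : H (b + t • d) ≤ (1 - t) * H b + t * H a := by
      have := hH.2 hb ha (sub_nonneg.2 ht.2) ht.1 (sub_add_cancel 1 t)
      rwa [show (1 - t) • b + t • a = b + t • d by simp only [d]; module] at this
    have hval : G b + H b ≤ G (b + t • d) + H (b + t • d) := hmin (hmem ht)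
    simp only [q, Set.mem_ofPred_eq, zero_smul, add_zero, zero_mul]
    linarith
  have hone : (1 : ℝ) ∈ posTangentConeAt (Set.Icc (0 : ℝ) 1) 0 :=
    mem_posTangentConeAt_of_segment_subset (by simp [segment_eq_Icc])
  simpa using hqmin.localize.hasFDerivWithinAt_nonneg hq.hasFDerivWithinAt hone

section MirrorStep

variable {E : Type*} [NormedAddCommGroup E] [InnerProductSpace ℝ E] [CompleteSpace E]
  {C : Set E} {ω h : E → ℝ} {a b : E} {α γ : ℝ}

theorem mul_sq_norm_sub_le_of_isMinOn_mirrorModel {g : E} (hγ : 0 < γ) (hh : ConvexOn ℝ C h)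
    (hω : DifferentiableAt ℝ ω b)
    (hmod : α * ‖a - b‖ ^ 2 ≤ ⟪a - b, gradient ω a - gradient ω b⟫) (ha : a ∈ C) (hb : b ∈ C)
    (hmin : IsMinOn (mirrorModel (bregman ω) h g γ a) C b) :
    α / γ * ‖a - b‖ ^ 2 ≤ ⟪g, a - b⟫ + (h a - h b) := by
  have hsmooth := ((InnerProductSpace.toDual ℝ E g).hasFDerivAt (x := b)).add
    ((hasGradientAt_bregman_left hω a).hasFDerivAt.const_mul (1 / γ))
  have hopt : 0 ≤ ⟪g, a - b⟫ + 1 / γ * ⟪gradient ω b - gradient ω a, a - b⟫ + (h a - h b) :=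
    fderiv_sub_add_sub_nonneg_of_isMinOn hh hsmooth.hasFDerivWithinAt ha hb hmin
  have hprox : α / γ * ‖a - b‖ ^ 2 ≤ -(1 / γ * ⟪gradient ω b - gradient ω a, a - b⟫) :=
    calc α / γ * ‖a - b‖ ^ 2 = 1 / γ * (α * ‖a - b‖ ^ 2) := by ring
      _ ≤ 1 / γ * ⟪a - b, gradient ω a - gradient ω b⟫ := by gcongr
      _ = -(1 / γ * ⟪gradient ω b - gradient ω a, a - b⟫) := by
        rw [real_inner_comm, ← mul_neg, ← inner_neg_left, neg_sub]
  linarith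

theorem add_mul_sq_norm_sub_le_of_isMinOn_mirrorModel {f : E → ℝ} {L : ℝ} (hγ : 0 < γ)
    (hf : ∀ u ∈ C, DifferentiableAt ℝ f u)
    (hL : ∀ u ∈ C, ‖gradient f u - gradient f a‖ ≤ L * ‖u - a‖)
    (hh : ConvexOn ℝ C h) (hω : DifferentiableAt ℝ ω b)
    (hmod : α * ‖a - b‖ ^ 2 ≤ ⟪a - b, gradient ω a - gradient ω b⟫) (ha : a ∈ C) (hb : b ∈ C)
    (hmin : IsMinOn (mirrorModel (bregman ω) h (gradient f a) γ a) C b) :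
    f b + h b + (α / γ - L / 2) * ‖a - b‖ ^ 2 ≤ f a + h a := by
  have hprox := mul_sq_norm_sub_le_of_isMinOn_mirrorModel hγ hh hω hmod ha hb hmin
  have hdesc := le_add_inner_gradient_add_of_norm_gradient_sub_le (hh.1.starConvex ha) hb hf hL
  rw [← neg_sub a b, inner_neg_right, norm_neg] at hdesc
  linarith

end MirrorStep

section BlockStep

variable {ι : Type*} {E : ι → Type*}

/-- The product `X_1 × ⋯ × X_p` of the block constraint sets, inside the `ℓ²` product of the
block spaces. -/
def blockProd (C : ∀ i, Set (E i)) : Set (PiLp 2 E) :=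
  {x | ∀ i, x i ∈ C i}

variable [Fintype ι] [∀ i, NormedAddCommGroup (E i)] [∀ i, InnerProductSpace ℝ (E i)]
  [∀ i, CompleteSpace (E i)]

/-- `y` arises from `z` by a coordinate mirror descent step in the `i`-th block: `y(i)` minimizes
the block model over `X_i = C i`, and the other blocks are unchanged. Minimizers are not assumed
unique, so this is a relation rather than a function. -/
structure IsBlockMirrorStep (C : ∀ i, Set (E i)) (V : ∀ i, E i → E i → ℝ) (H : ∀ i, E i → ℝ)
    (f : PiLp 2 E → ℝ) (γ : ℝ) (i : ι) (z y : PiLp 2 E) : Prop where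
  mem : y i ∈ C i
  isMinOn : IsMinOn (mirrorModel (V i) (H i) (gradient f z i) γ (z i)) (C i) (y i)
  apply_of_ne : ∀ j, j ≠ i → y j = z j

theorem IsBlockMirrorStep.mem_blockProd {C : ∀ i, Set (E i)} {V : ∀ i, E i → E i → ℝ}
    {H : ∀ i, E i → ℝ} {f : PiLp 2 E → ℝ} {γ : ℝ} {i : ι} {z y : PiLp 2 E}
    (hstep : IsBlockMirrorStep C V H f γ i z y) (hz : z ∈ blockProd C) :
    y ∈ blockProd C := by
  intro j
  by_cases hj : j = i
  · subst hj
    exact hstep.mem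
  · rw [hstep.apply_of_ne j hj]
    exact hz j

end BlockStep

section Blocks

variable {ι : Type*} [DecidableEq ι] {E : ι → Type*}

/-- The point `x` with its `i`-th block replaced by `u`, i.e. `x + U_i (u - x(i))` for the block
embedding `U_i = PiLp.single 2 i`. -/
def replaceBlock (x : PiLp 2 E) (i : ι) (u : E i) : PiLp 2 E :=
  WithLp.toLp 2 (Function.update x i u)

@[simp]
theorem replaceBlock_self (x : PiLp 2 E) (i : ι) : replaceBlock x i (x i) = x := by
  simp [replaceBlock]

@[simp]
theorem replaceBlock_apply_same (x : PiLp 2 E) (i : ι) (u : E i) : replaceBlock x i u i = u := by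
  simp [replaceBlock]

@[simp]
theorem replaceBlock_apply_of_ne (x : PiLp 2 E) {i j : ι} (hj : j ≠ i) (u : E i) :
    replaceBlock x i u j = x j := by
  simp [replaceBlock, hj]

theorem replaceBlock_mem_blockProd {C : ∀ i, Set (E i)} {x : PiLp 2 E} (hx : x ∈ blockProd C)
    {i : ι} {u : E i} (hu : u ∈ C i) : replaceBlock x i u ∈ blockProd C := by
  intro j
  by_cases hj : j = i
  · subst hj
    simpa using hu
  · simpa [hj] using hx j

theorem sum_replaceBlock [Fintype ι] (G : ∀ i, E i → ℝ) (x : PiLp 2 E) (i : ι) (u : E i) :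
    ∑ j, G j (replaceBlock x i u j) = G i u + ∑ j ∈ Finset.univ.erase i, G j (x j) := by
  rw [← Finset.add_sum_erase _ _ (Finset.mem_univ i), replaceBlock_apply_same]
  congr 1
  exact Finset.sum_congr rfl fun j hj => by
    rw [replaceBlock_apply_of_ne x (Finset.ne_of_mem_erase hj)]

section Module

variable [∀ i, AddCommGroup (E i)] [∀ i, Module ℝ (E i)]

theorem smul_replaceBlock_add_smul_replaceBlock (x : PiLp 2 E) (i : ι) (u v : E i) {s t : ℝ}
    (hst : s + t = 1) :
    s • replaceBlock x i u + t • replaceBlock x i v = replaceBlock x i (s • u + t • v) := by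
  ext j : 1
  change s • replaceBlock x i u j + t • replaceBlock x i v j = _
  by_cases hj : j = i
  · subst hj
    simp only [replaceBlock_apply_same]
  · simp only [replaceBlock_apply_of_ne x hj, ← add_smul, hst, one_smul]

theorem convexOn_comp_replaceBlock {C : ∀ i, Set (E i)} {h : PiLp 2 E → ℝ}
    (hh : ConvexOn ℝ (blockProd C) h) {x : PiLp 2 E} (hx : x ∈ blockProd C) (i : ι) :
    ConvexOn ℝ (C i) fun u => h (replaceBlock x i u) := by
  refine ⟨fun u hu v hv s t hs ht hst => ?_, fun u hu v hv s t hs ht hst => ?_⟩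
  · have hmem := hh.1 (replaceBlock_mem_blockProd hx hu) (replaceBlock_mem_blockProd hx hv)
      hs ht hst
    rw [smul_replaceBlock_add_smul_replaceBlock x i u v hst] at hmem
    simpa using hmem i
  · have hle := hh.2 (replaceBlock_mem_blockProd hx hu) (replaceBlock_mem_blockProd hx hv)
      hs ht hst
    rwa [smul_replaceBlock_add_smul_replaceBlock x i u v hst] at hle

end Module

variable [∀ i, NormedAddCommGroup (E i)]

theorem replaceBlock_sub_replaceBlock (x : PiLp 2 E) (i : ι) (u v : E i) :
    replaceBlock x i u - replaceBlock x i v = PiLp.single 2 i (u - v) := by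
  ext j : 1
  by_cases hj : j = i
  · subst hj
    simp
  · simp [hj]

variable [Fintype ι] [∀ i, InnerProductSpace ℝ (E i)]

theorem inner_piLp_single_right (x : PiLp 2 E) (i : ι) (v : E i) :
    ⟪x, PiLp.single 2 i v⟫ = ⟪x i, v⟫ := by
  rw [PiLp.inner_apply, Finset.sum_eq_single i (fun j _ hj => by simp [hj]) (by simp)]
  simp

variable [∀ i, CompleteSpace (E i)]

theorem hasGradientAt_comp_replaceBlock {f : PiLp 2 E → ℝ} {x : PiLp 2 E} {i : ι} {u : E i}
    (hf : DifferentiableAt ℝ f (replaceBlock x i u)) :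
    HasGradientAt (fun v => f (replaceBlock x i v)) (gradient f (replaceBlock x i u) i) u := by
  have hreplace : HasFDerivAt (replaceBlock x i)
      ((PiLp.continuousLinearEquiv 2 ℝ E).symm.toContinuousLinearMap ∘L
        ContinuousLinearMap.pi (Pi.single i (ContinuousLinearMap.id ℝ (E i)))) u :=
    (PiLp.continuousLinearEquiv 2 ℝ E).symm.hasFDerivAt.comp u (hasFDerivAt_update x.ofLp u)
  have hembed : ∀ v : E i, WithLp.toLp 2 (ContinuousLinearMap.pi
      (Pi.single i (ContinuousLinearMap.id ℝ (E i))) v) = (PiLp.single 2 i v : PiLp 2 E) := by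
    intro v
    ext j : 1
    exact Pi.apply_single (fun j (A : E i →L[ℝ] E j) => A v) (fun _ => rfl) i _ j
  refine (hf.hasGradientAt.hasFDerivAt.comp u hreplace).congr_fderiv ?_
  ext v
  exact (congrArg (fun w => ⟪gradient f (replaceBlock x i u), w⟫) (hembed v)).trans
    (inner_piLp_single_right _ i v)

theorem gradient_comp_replaceBlock {f : PiLp 2 E → ℝ} {x : PiLp 2 E} {i : ι} {u : E i}
    (hf : DifferentiableAt ℝ f (replaceBlock x i u)) :
    gradient (fun v => f (replaceBlock x i v)) u = gradient f (replaceBlock x i u) i :=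
  (hasGradientAt_comp_replaceBlock hf).gradient

theorem bregman_comp_replaceBlock {ω : PiLp 2 E → ℝ} {x : PiLp 2 E} {i : ι} {v : E i}
    (hω : DifferentiableAt ℝ ω (replaceBlock x i v)) (u : E i) :
    bregman (fun w => ω (replaceBlock x i w)) u v
      = bregman ω (replaceBlock x i u) (replaceBlock x i v) := by
  rw [bregman, bregman, gradient_comp_replaceBlock hω, replaceBlock_sub_replaceBlock,
    inner_piLp_single_right]

namespace IsBlockMirrorStep

variable {C : ∀ i, Set (E i)} {V : ∀ i, E i → E i → ℝ} {H : ∀ i, E i → ℝ} {f : PiLp 2 E → ℝ}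
  {γ : ℝ} {i : ι} {z y : PiLp 2 E}

theorem eq_replaceBlock (hstep : IsBlockMirrorStep C V H f γ i z y) :
    y = replaceBlock z i (y i) := by
  ext j : 1
  by_cases hj : j = i
  · subst hj
    simp
  · simp [hj, hstep.apply_of_ne j hj]

theorem isMinOn_comp_replaceBlock {ω h : PiLp 2 E → ℝ}
    (hstep : IsBlockMirrorStep C V H f γ i z y) (hz : z ∈ blockProd C)
    (hω : DifferentiableAt ℝ ω z) (hH : ∀ x ∈ blockProd C, h x = ∑ j, H j (x j))
    (hV : ∀ x ∈ blockProd C, bregman ω x z = ∑ j, V j (x j) (z j)) :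
    IsMinOn (mirrorModel (bregman fun u => ω (replaceBlock z i u)) (fun u => h (replaceBlock z i u))
      (gradient f z i) γ (z i)) (C i) (y i) := by
  obtain ⟨c, hc⟩ : ∃ c, ∀ u ∈ C i,
      mirrorModel (bregman fun u => ω (replaceBlock z i u)) (fun u => h (replaceBlock z i u))
        (gradient f z i) γ (z i) u = mirrorModel (V i) (H i) (gradient f z i) γ (z i) u + c := by
    refine ⟨1 / γ * ∑ j ∈ Finset.univ.erase i, V j (z j) (z j)
      + ∑ j ∈ Finset.univ.erase i, H j (z j), fun u hu => ?_⟩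
    have hmem := replaceBlock_mem_blockProd hz hu
    rw [mirrorModel, mirrorModel, bregman_comp_replaceBlock (by rwa [replaceBlock_self]),
      replaceBlock_self, hV _ hmem, hH _ hmem, sum_replaceBlock H,
      sum_replaceBlock fun j v => V j v (z j)]
    ring
  intro u hu
  rw [Set.mem_ofPred_eq, hc u hu, hc _ hstep.mem]
  exact add_le_add_left (hstep.isMinOn hu) c

theorem add_mul_sq_norm_sub_le {ω h : PiLp 2 E → ℝ} {α L : ℝ}
    (hstep : IsBlockMirrorStep C V H f γ i z y) (hz : z ∈ blockProd C) (hγ : 0 < γ)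
    (hf : ∀ x ∈ blockProd C, DifferentiableAt ℝ f x)
    (hL : ∀ u ∈ C i, ‖gradient f (replaceBlock z i u) i - gradient f z i‖ ≤ L * ‖u - z i‖)
    (hh : ConvexOn ℝ (blockProd C) h) (hH : ∀ x ∈ blockProd C, h x = ∑ j, H j (x j))
    (hω : ∀ x ∈ blockProd C, DifferentiableAt ℝ ω x)
    (hmod : α * ‖z - y‖ ^ 2 ≤ ⟪z - y, gradient ω z - gradient ω y⟫)
    (hV : ∀ x ∈ blockProd C, bregman ω x z = ∑ j, V j (x j) (z j)) :
    f y + h y + (α / γ - L / 2) * ‖z i - y i‖ ^ 2 ≤ f z + h z := by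
  have hblock : ∀ u ∈ C i, replaceBlock z i u ∈ blockProd C := fun _ hu =>
    replaceBlock_mem_blockProd hz hu
  have hgrad : ∀ {F : PiLp 2 E → ℝ}, (∀ x ∈ blockProd C, DifferentiableAt ℝ F x) → ∀ u ∈ C i,
      gradient (fun v => F (replaceBlock z i v)) u = gradient F (replaceBlock z i u) i :=
    fun hF u hu => gradient_comp_replaceBlock (hF _ (hblock u hu))
  have hsub : z - y = PiLp.single 2 i (z i - y i) := by
    rw [← replaceBlock_sub_replaceBlock z, replaceBlock_self, ← hstep.eq_replaceBlock]
  have hmodblock : α * ‖z i - y i‖ ^ 2 ≤ ⟪z i - y i,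
      gradient (fun v => ω (replaceBlock z i v)) (z i)
        - gradient (fun v => ω (replaceBlock z i v)) (y i)⟫ := by
    rw [hgrad hω _ (hz i), hgrad hω _ hstep.mem, replaceBlock_self, ← hstep.eq_replaceBlock]
    rw [hsub, PiLp.norm_single, real_inner_comm, inner_piLp_single_right, real_inner_comm] at hmod
    exact hmod
  have hdecrease := add_mul_sq_norm_sub_le_of_isMinOn_mirrorModel
    (f := fun u => f (replaceBlock z i u)) (h := fun u => h (replaceBlock z i u))
    (ω := fun u => ω (replaceBlock z i u)) (a := z i) (b := y i) (L := L) hγ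
    (fun u hu => (hasGradientAt_comp_replaceBlock (hf _ (hblock u hu))).differentiableAt)
    (fun u hu => by
      rw [hgrad hf u hu, hgrad hf _ (hz i), replaceBlock_self]
      exact hL u hu)
    (convexOn_comp_replaceBlock hh hz i)
    (hasGradientAt_comp_replaceBlock (hω _ (hblock _ hstep.mem))).differentiableAt
    hmodblock (hz i) hstep.mem
    (by
      rw [hgrad hf _ (hz i), replaceBlock_self]
      exact hstep.isMinOn_comp_replaceBlock hz (hω z hz) hH hV)
  simpa only [replaceBlock_self, ← hstep.eq_replaceBlock] using hdecrease

end IsBlockMirrorStep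

end Blocks

section Sweeps

variable {X : Type*} {p N : ℕ} {x : ℕ → ℕ → X}

theorem mem_of_forall_lt_mem_succ {S : Set X} {w : ℕ → X} (h₀ : w 0 ∈ S)
    (hstep : ∀ i < p, w i ∈ S → w (i + 1) ∈ S) : ∀ i ≤ p, w i ∈ S := by
  intro i
  induction i with
  | zero => exact fun _ => h₀
  | succ i ih => exact fun hi => hstep i hi (ih (Nat.le_of_succ_le hi))

theorem mem_sweep_start {S : Set X} (h₀ : x 0 0 ∈ S) (hlink : ∀ k, x (k + 1) 0 = x k p)
    (hstep : ∀ k < N, ∀ i < p, x k i ∈ S → x k (i + 1) ∈ S) : ∀ k ≤ N, x k 0 ∈ S :=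
  mem_of_forall_lt_mem_succ (w := fun k => x k 0) h₀ fun k hk hmem => by
    simpa only [hlink] using mem_of_forall_lt_mem_succ hmem (hstep k hk) p le_rfl

theorem exists_sum_le_div_of_mul_le_sub {φ : X → ℝ} {d : ℕ → Fin p → ℝ} {c m : ℝ} (hN : 0 < N)
    (hc : 0 < c) (hlink : ∀ k, x (k + 1) 0 = x k p)
    (hstep : ∀ k < N, ∀ i : Fin p, c * d k i ≤ φ (x k i) - φ (x k (i + 1)))
    (hm : m ≤ φ (x N 0)) :
    ∃ k < N, ∑ i, d k i ≤ (φ (x 0 0) - m) / (N * c) := by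
  have hsweep : ∀ k < N, c * ∑ i, d k i ≤ φ (x k 0) - φ (x (k + 1) 0) := fun k hk =>
    calc c * ∑ i, d k i = ∑ i, c * d k i := Finset.mul_sum ..
      _ ≤ ∑ i : Fin p, (φ (x k i) - φ (x k (i + 1))) := Finset.sum_le_sum fun i _ => hstep k hk i
      _ = φ (x k 0) - φ (x (k + 1) 0) := by
        rw [Fin.sum_univ_eq_sum_range (fun i => φ (x k i) - φ (x k (i + 1))) p,
          Finset.sum_range_sub' (fun i => φ (x k i)), hlink]
  have htotal : ∑ k ∈ Finset.range N, c * ∑ i, d k i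
      ≤ ∑ _k ∈ Finset.range N, (φ (x 0 0) - m) / N :=
    calc ∑ k ∈ Finset.range N, c * ∑ i, d k i
        ≤ ∑ k ∈ Finset.range N, (φ (x k 0) - φ (x (k + 1) 0)) :=
          Finset.sum_le_sum fun k hk => hsweep k (Finset.mem_range.1 hk)
      _ = φ (x 0 0) - φ (x N 0) := Finset.sum_range_sub' (fun k => φ (x k 0)) N
      _ ≤ φ (x 0 0) - m := by gcongr
      _ = ∑ _k ∈ Finset.range N, (φ (x 0 0) - m) / N := by
        rw [Finset.sum_const, Finset.card_range, nsmul_eq_mul]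
        field_simp
  obtain ⟨k, hk, hle⟩ := Finset.exists_le_of_sum_le (Finset.nonempty_range_iff.2 hN.ne') htotal
  exact ⟨k, Finset.mem_range.1 hk, by rwa [← div_div, le_div_iff₀' hc]⟩

end Sweeps

theorem stmt0_general {p : ℕ} {E : Fin p → Type*} [∀ i, NormedAddCommGroup (E i)]
    [∀ i, InnerProductSpace ℝ (E i)] [∀ i, CompleteSpace (E i)] {C : ∀ i, Set (E i)}
    {f h ω : PiLp 2 E → ℝ} {H : ∀ i, E i → ℝ} {V : ∀ i, E i → E i → ℝ} {L α γ m : ℝ} {N : ℕ}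
    {x : ℕ → ℕ → PiLp 2 E} (hf : ∀ z ∈ blockProd C, DifferentiableAt ℝ f z)
    (hL : ∀ i, ∀ z ∈ blockProd C, ∀ u ∈ C i,
      ‖gradient f (replaceBlock z i u) i - gradient f z i‖ ≤ L * ‖u - z i‖)
    (hh : ConvexOn ℝ (blockProd C) h) (hH : ∀ z ∈ blockProd C, h z = ∑ i, H i (z i))
    (hω : ∀ z ∈ blockProd C, DifferentiableAt ℝ ω z)
    (hmod : ∀ y ∈ blockProd C, ∀ z ∈ blockProd C,
      α * ‖y - z‖ ^ 2 ≤ ⟪y - z, gradient ω y - gradient ω z⟫)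
    (hV : ∀ y ∈ blockProd C, ∀ z ∈ blockProd C, bregman ω y z = ∑ i, V i (y i) (z i))
    (hN : 0 < N) (hγ : 0 < γ) (hγL : γ * L < 2 * α) (hx₀ : x 0 0 ∈ blockProd C)
    (hlink : ∀ k, x (k + 1) 0 = x k p)
    (hstep : ∀ k < N, ∀ i : Fin p, IsBlockMirrorStep C V H f γ i (x k i) (x k (i + 1)))
    (hm : ∀ z ∈ blockProd C, m ≤ f z + h z) :
    ∃ k < N, ∑ i : Fin p, ‖(1 / γ) • (x k i i - x k (i + 1) i)‖ ^ 2
      ≤ 2 * (f (x 0 0) + h (x 0 0) - m) / (N * (γ * (2 * α - γ * L))) := by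
  have hmem : ∀ k < N, ∀ i < p, x k i ∈ blockProd C → x k (i + 1) ∈ blockProd C :=
    fun k hk i hi => (hstep k hk ⟨i, hi⟩).mem_blockProd
  have hsweep := mem_sweep_start hx₀ hlink hmem
  have hdecrease : ∀ k < N, ∀ i : Fin p,
      γ * (2 * α - γ * L) / 2 * ‖(1 / γ) • (x k i i - x k (i + 1) i)‖ ^ 2
        ≤ f (x k i) + h (x k i) - (f (x k (i + 1)) + h (x k (i + 1))) := by
    intro k hk i
    have hz := mem_of_forall_lt_mem_succ (hsweep k hk.le) (hmem k hk) i i.2.le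
    have hle := (hstep k hk i).add_mul_sq_norm_sub_le hz hγ hf (hL i _ hz) hh hH hω
      (hmod _ hz _ (hmem k hk i i.2 hz)) (fun y hy => hV y hy _ hz)
    have hscale : γ * (2 * α - γ * L) / 2 * ‖(1 / γ) • (x k i i - x k (i + 1) i)‖ ^ 2
        = (α / γ - L / 2) * ‖x k i i - x k (i + 1) i‖ ^ 2 := by
      rw [norm_smul, mul_pow, Real.norm_eq_abs, sq_abs]
      field_simp
    linarith
  have hc : 0 < γ * (2 * α - γ * L) / 2 := half_pos (mul_pos hγ (sub_pos.2 hγL))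
  obtain ⟨k, hk, hle⟩ := exists_sum_le_div_of_mul_le_sub (φ := fun z => f z + h z) hN hc hlink
    hdecrease (hm _ (hsweep N le_rfl))
  refine ⟨k, hk, hle.trans_eq ?_⟩
  rw [← mul_div_assoc, div_div_eq_mul_div, mul_comm (_ - m)]

theorem blockGrad_eq_gradient_apply {p : ℕ} {n : Fin p → ℕ} {f : BlockSpace p n → ℝ}
    {x : BlockSpace p n} (hf : DifferentiableAt ℝ f x) (i : Fin p) :
    blockGrad f i x = gradient f x i := by
  have hself := replaceBlock_self x i
  rw [← hself] at hf
  exact (gradient_comp_replaceBlock hf).trans (by rw [hself])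

/-- Non-asymptotic stationary convergence of coordinate mirror descent.
With blockwise Lipschitz gradients (constants `L_i`, `L = max L_i`), an `α`-strongly convex
separable `h`, a distance generating function `ω` of modulus `α` with blockwise decomposable
prox-function, and stepsizes `γ = α / L`, after `N` outer iterations one has
`min_{1 ≤ k ≤ N} Δ(x_k, x_{k-1}) ≤ 2 D² L² / (N α²)`. -/
theorem stmt0 {p : ℕ} (hp : 0 < p) {n : Fin p → ℕ}
    (Xb : ∀ i : Fin p, Set (EuclideanSpace ℝ (Fin (n i))))
    (hXne : ∀ i, (Xb i).Nonempty) (hXcl : ∀ i, IsClosed (Xb i))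
    (hXcv : ∀ i, Convex ℝ (Xb i))
    (X : Set (BlockSpace p n)) (hX : X = {x : BlockSpace p n | ∀ i, x i ∈ Xb i})
    (f : BlockSpace p n → ℝ) (hf : ContDiff ℝ 1 f)
    (Lb : Fin p → ℝ) (hLbpos : ∀ i, 0 < Lb i)
    (hLip : ∀ (i : Fin p) (x : BlockSpace p n) (hi : EuclideanSpace ℝ (Fin (n i))),
      ‖blockGrad f i (WithLp.toLp 2 (Function.update x i (x i + hi))) - blockGrad f i x‖ ≤ Lb i * ‖hi‖)
    (L : ℝ) (hLub : ∀ i, Lb i ≤ L) (hLmem : ∃ i, Lb i = L)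
    (α : ℝ) (hα : 0 < α)
    (h : BlockSpace p n → ℝ) (hhcont : ContinuousOn h X) (hhsc : StrongConvexOn X α h)
    (hb : ∀ i : Fin p, EuclideanSpace ℝ (Fin (n i)) → ℝ)
    (hhdecomp : ∀ x : BlockSpace p n, h x = ∑ i, hb i (x i))
    (ω : BlockSpace p n → ℝ) (hω : ContDiff ℝ 1 ω)
    (hωmod : ∀ x ∈ X, ∀ z ∈ X,
      α * ‖x - z‖ ^ 2 ≤ ⟪x - z, gradient ω x - gradient ω z⟫)
    (Vb : ∀ i : Fin p,
      EuclideanSpace ℝ (Fin (n i)) → EuclideanSpace ℝ (Fin (n i)) → ℝ)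
    (hVdecomp : ∀ x z : BlockSpace p n,
      ω x - ω z - ⟪gradient ω z, x - z⟫ = ∑ i, Vb i (x i) (z i))
    (N : ℕ) (hN : 0 < N)
    (γ : ℝ) (hγ : γ = α / L)
    (iter : ℕ → ℕ → BlockSpace p n)
    (hinit : iter 0 0 ∈ X)
    (hlink : ∀ k, iter (k + 1) 0 = iter k p)
    (hupdate : ∀ k < N, ∀ i : Fin p,
      iter k ((i : ℕ) + 1) i ∈ Xb i ∧
      ∀ u ∈ Xb i,
        ⟪blockGrad f i (iter k (i : ℕ)), iter k ((i : ℕ) + 1) i⟫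
            + (1 / γ) * Vb i (iter k ((i : ℕ) + 1) i) (iter k (i : ℕ) i)
            + hb i (iter k ((i : ℕ) + 1) i)
          ≤ ⟪blockGrad f i (iter k (i : ℕ)), u⟫
            + (1 / γ) * Vb i u (iter k (i : ℕ) i) + hb i u)
    (hfix : ∀ k < N, ∀ i j : Fin p, j ≠ i →
      iter k ((i : ℕ) + 1) j = iter k (i : ℕ) j)
    (Φstar : ℝ) (hΦstar : IsLeast ((fun x => f x + h x) '' X) Φstar)
    (D : ℝ) (hD : D = Real.sqrt ((f (iter 0 0) + h (iter 0 0) - Φstar) / L)) :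
    ∃ k < N, ∑ i : Fin p,
        ‖(1 / γ) • (iter k (i : ℕ) i - iter k ((i : ℕ) + 1) i)‖ ^ 2
      ≤ 2 * D ^ 2 * L ^ 2 / ((N : ℝ) * α ^ 2) := by
  obtain ⟨i, rfl⟩ := hLmem
  have hL : 0 < Lb i := hLbpos i
  have hfd : Differentiable ℝ f := hf.differentiable one_ne_zero
  have hgap : 0 ≤ f (iter 0 0) + h (iter 0 0) - Φstar := sub_nonneg.2 (hΦstar.2 ⟨_, hinit, rfl⟩)
  subst hX hγ hD
  simp only [blockGrad_eq_gradient_apply (hfd _)] at hLip hupdate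
  obtain ⟨k, hk, hle⟩ := stmt0_general (fun z _ => hfd z)
    (fun j z _ u _ => by simpa using! (hLip j z (u - z j)).trans (by gcongr; exact hLub j))
    (strongConvexOn_zero.1 (hhsc.mono hα.le)) (fun z _ => hhdecomp z)
    (fun z _ => hω.differentiable one_ne_zero z) hωmod (fun y _ z _ => hVdecomp y z) hN
    (div_pos hα hL) (by rw [div_mul_cancel₀ _ hL.ne']; linarith) hinit hlink
    (fun k hk j => ⟨(hupdate k hk j).1, (hupdate k hk j).2, hfix k hk j⟩)
    (fun z hz => hΦstar.2 ⟨z, hz, rfl⟩)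
  refine ⟨k, hk, hle.trans_eq ?_⟩
  rw [Real.sq_sqrt (by positivity)]
  field_simp
  ring
end

section
/- Let n, m ≥ 1, z = min(n, m), and let r be an integer with 2 ≤ r ≤ z. Let C ∈ ℝ^{n×m}, a ∈ Δ_n, b ∈ Δ_m. Let Π_{a,b} be the set of couplings of a and b, and let Π_{a,b}(r) ⊆ Π_{a,b} be the subset of couplings of nonnegative rank at most r. Then 0 ≤ inf_{P ∈ Π_{a,b}(r)} ⟨C, P⟩_F − inf_{P ∈ Π_{a,b}} ⟨C, P⟩_F ≤ (max_{p,q} C_{pq} − min_{p,q} C_{pq}) · log(z/(r−1)), where log is the natural logarithm. -/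
open Matrix

/-- Frobenius inner product `⟨C, P⟩_F`. -/
def frob {n m : ℕ} (C P : Matrix (Fin n) (Fin m) ℝ) : ℝ := ∑ i, ∑ j, C i j * P i j

/-- The set `Π_{a,b}` of couplings of `a` and `b`. -/
def couplings {n m : ℕ} (a : Fin n → ℝ) (b : Fin m → ℝ) : Set (Matrix (Fin n) (Fin m) ℝ) :=
  {P | (∀ i j, 0 ≤ P i j) ∧ (∀ i, ∑ j, P i j = a i) ∧ (∀ j, ∑ i, P i j = b j)}

/-- `P` has nonnegative rank at most `r`. -/
def hasNNRankLE {n m : ℕ} (r : ℕ) (P : Matrix (Fin n) (Fin m) ℝ) : Prop :=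
  ∃ (u : Fin r → Fin n → ℝ) (v : Fin r → Fin m → ℝ),
    (∀ k i, 0 ≤ u k i) ∧ (∀ k j, 0 ≤ v k j) ∧ ∀ i j, P i j = ∑ k, u k i * v k j

/-!
Given a coupling `P` and `s ≤ n`, averaging provides `n - s` rows carrying at most the fraction
`(n - s) / n` of the total mass. Replace the block of `P` formed by these rows by the rank-one block
with the same row and column sums. The result is again a coupling; it is a sum of `s` single rows
and one rank-one block, so its nonnegative rank is at most `s + 1`; and only the mass of the block
has moved, so the cost grows by at most `max C - min C` times that mass. Transposing allows `n` to
be replaced by `min n m`, and `1 - 1 / x ≤ log x` gives the logarithmic bound.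
-/

theorem exists_subset_card_eq_sum_le_mul_sum {ι : Type*} (f : ι → ℝ) {S : Finset ι} {k : ℕ}
    (hk : k ≤ S.card) :
    ∃ T ⊆ S, T.card = k ∧ ∑ i ∈ T, f i ≤ k / S.card * ∑ i ∈ S, f i := by
  classical
  induction hk using Nat.decreasingInduction with
  | self =>
    refine ⟨S, subset_rfl, rfl, ?_⟩
    rcases S.eq_empty_or_nonempty with rfl | hS
    · simp
    · rw [div_self (Nat.cast_ne_zero.2 hS.card_ne_zero), one_mul]
  | of_succ k _ ih =>
    obtain ⟨T, hTS, hT, hsum⟩ := ih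
    have hTne : T.Nonempty := Finset.card_pos.1 (by omega)
    have hk0 : (0 : ℝ) < k + 1 := by positivity
    obtain ⟨x, hxT, hx⟩ : ∃ x ∈ T, (∑ i ∈ T, f i) / (k + 1) ≤ f x := by
      refine Finset.exists_le_of_sum_le hTne (le_of_eq ?_)
      rw [Finset.sum_const, hT, nsmul_eq_mul, Nat.cast_succ, mul_div_cancel₀ _ hk0.ne']
    refine ⟨T.erase x, (T.erase_subset x).trans hTS, by simp [hxT, hT], ?_⟩
    calc ∑ i ∈ T.erase x, f i = ∑ i ∈ T, f i - f x := Finset.sum_erase_eq_sub hxT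
      _ ≤ ∑ i ∈ T, f i - (∑ i ∈ T, f i) / (k + 1) := by gcongr
      _ = k / (k + 1) * ∑ i ∈ T, f i := by field_simp; ring
      _ ≤ k / (k + 1) * ((k + 1 : ℕ) / S.card * ∑ i ∈ S, f i) := by gcongr
      _ = k / S.card * ∑ i ∈ S, f i := by push_cast; field_simp

theorem sum_mul_sub_sum_mul_le {κ : Type*} [Fintype κ] {w p q : κ → ℝ} {c d : ℝ}
    (hc : ∀ j, c ≤ w j) (hd : ∀ j, w j ≤ d) (hp : ∀ j, 0 ≤ p j) (hq : ∀ j, 0 ≤ q j)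
    (hpq : ∑ j, q j = ∑ j, p j) :
    ∑ j, w j * q j - ∑ j, w j * p j ≤ (d - c) * ∑ j, p j :=
  calc ∑ j, w j * q j - ∑ j, w j * p j ≤ ∑ j, d * q j - ∑ j, c * p j := by
        gcongr with j _ j _
        exacts [hq j, hd j, hp j, hc j]
    _ = (d - c) * ∑ j, p j := by rw [← Finset.mul_sum, ← Finset.mul_sum, hpq, sub_mul]

theorem one_sub_div_le_log_div {x y : ℝ} (hx : 0 < x) (hy : 0 < y) :
    1 - x / y ≤ Real.log (y / x) :=
  inv_div y x ▸ Real.one_sub_inv_le_log_of_pos (div_pos hy hx)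

theorem sInf_image_sub_sInf_image_bounds {α : Type*} {f : α → ℝ} {S T : Set α} {ε : ℝ}
    (hST : S ⊆ T) (hT : T.Nonempty) (hbdd : BddBelow (f '' T))
    (happrox : ∀ x ∈ T, ∃ y ∈ S, f y - f x ≤ ε) :
    0 ≤ sInf (f '' S) - sInf (f '' T) ∧ sInf (f '' S) - sInf (f '' T) ≤ ε := by
  have hsub : f '' S ⊆ f '' T := Set.image_mono hST
  have hS : S.Nonempty :=
    let ⟨x, hx⟩ := hT
    let ⟨y, hy, _⟩ := happrox x hx
    ⟨y, hy⟩
  refine ⟨sub_nonneg.2 (csInf_le_csInf hbdd (hS.image f) hsub), ?_⟩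
  rw [sub_le_comm]
  refine le_csInf (hT.image f) (Set.forall_mem_image.2 fun x hx => ?_)
  obtain ⟨y, hy, hyx⟩ := happrox x hx
  have hinf : sInf (f '' S) ≤ f y := csInf_le (hbdd.mono hsub) (Set.mem_image_of_mem f hy)
  linarith

section Transpose

variable {n m : ℕ}

theorem frob_transpose (C P : Matrix (Fin n) (Fin m) ℝ) : frob Cᵀ Pᵀ = frob C P :=
  Finset.sum_comm

theorem transpose_mem_couplings {a : Fin n → ℝ} {b : Fin m → ℝ} {P : Matrix (Fin n) (Fin m) ℝ}
    (hP : P ∈ couplings a b) : Pᵀ ∈ couplings b a :=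
  ⟨fun i j => hP.1 j i, hP.2.2, hP.2.1⟩

theorem hasNNRankLE.transpose {r : ℕ} {P : Matrix (Fin n) (Fin m) ℝ} (hP : hasNNRankLE r P) :
    hasNNRankLE r Pᵀ := by
  obtain ⟨u, v, hu, hv, hP⟩ := hP
  refine ⟨v, u, hv, hu, fun i j => ?_⟩
  simp only [transpose_apply, hP, mul_comm]

end Transpose

section Couplings

variable {n m : ℕ} {a : Fin n → ℝ} {b : Fin m → ℝ}

theorem couplings_nonempty (ha0 : ∀ i, 0 ≤ a i) (ha1 : ∑ i, a i = 1) (hb0 : ∀ j, 0 ≤ b j)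
    (hb1 : ∑ j, b j = 1) : (couplings a b).Nonempty := by
  refine ⟨vecMulVec a b, fun i j => mul_nonneg (ha0 i) (hb0 j), fun i => ?_, fun j => ?_⟩
  · simp only [vecMulVec_apply, ← Finset.mul_sum, hb1, mul_one]
  · simp only [vecMulVec_apply, ← Finset.sum_mul, ha1, one_mul]

theorem sum_eq_sum_of_mem_couplings {P : Matrix (Fin n) (Fin m) ℝ} (hP : P ∈ couplings a b) :
    ∑ i, a i = ∑ j, b j := by
  simp only [← hP.2.1, ← hP.2.2]
  exact Finset.sum_comm

theorem bddBelow_frob_image_couplings (C : Matrix (Fin n) (Fin m) ℝ) :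
    BddBelow (frob C '' couplings a b) := by
  obtain ⟨c, hc⟩ := (Set.finite_range fun p : Fin n × Fin m => C p.1 p.2).bddBelow
  refine ⟨c * ∑ i, a i, Set.forall_mem_image.2 fun P hP => ?_⟩
  calc c * ∑ i, a i = ∑ i, ∑ j, c * P i j := by simp only [← hP.2.1, Finset.mul_sum]
    _ ≤ frob C P := Finset.sum_le_sum fun i _ => Finset.sum_le_sum fun j _ =>
        mul_le_mul_of_nonneg_right (hc ⟨(i, j), rfl⟩) (hP.1 i j)

end Couplings

theorem hasNNRankLE_of_eq_sum {n m r : ℕ} {ι : Type*} [Fintype ι] (hr : Fintype.card ι = r)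
    {u : ι → Fin n → ℝ} {v : ι → Fin m → ℝ} (hu : ∀ k i, 0 ≤ u k i) (hv : ∀ k j, 0 ≤ v k j)
    {P : Matrix (Fin n) (Fin m) ℝ} (hP : ∀ i j, P i j = ∑ k, u k i * v k j) :
    hasNNRankLE r P :=
  let e := (Fintype.equivFinOfCardEq hr).symm
  ⟨u ∘ e, v ∘ e, fun k => hu (e k), fun k => hv (e k),
    fun i j => (hP i j).trans (e.sum_comp fun k => u k i * v k j).symm⟩

theorem rowSum_div_blockSum_nonneg {ι κ : Type*} [Fintype κ] {P : Matrix ι κ ℝ}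
    (hP : ∀ i j, 0 ≤ P i j) (U : Finset ι) (i : ι) :
    0 ≤ (∑ l, P i l) / ∑ k ∈ U, ∑ l, P k l :=
  div_nonneg (Finset.sum_nonneg fun l _ => hP i l)
    (Finset.sum_nonneg fun k _ => Finset.sum_nonneg fun l _ => hP k l)

/-- The matrix `P` with its block of rows in `U` replaced by the rank-one block with the same row
and column sums, as long as `P` is entrywise nonnegative. If that block of `P` has mass zero, the
division by zero makes the new block zero, as it should be. -/
noncomputable def mergeRows {ι κ : Type*} [DecidableEq ι] [Fintype κ] (U : Finset ι)
    (P : Matrix ι κ ℝ) : Matrix ι κ ℝ :=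
  fun i j =>
    if i ∈ U then (∑ l, P i l) / (∑ k ∈ U, ∑ l, P k l) * ∑ k ∈ U, P k j else P i j

namespace mergeRows

section Marginals

variable {ι κ : Type*} [DecidableEq ι] [Fintype κ] {U : Finset ι} {P : Matrix ι κ ℝ}

theorem apply_of_mem {i : ι} (hi : i ∈ U) (j : κ) :
    mergeRows U P i j = (∑ l, P i l) / (∑ k ∈ U, ∑ l, P k l) * ∑ k ∈ U, P k j :=
  if_pos hi

theorem apply_of_notMem {i : ι} (hi : i ∉ U) (j : κ) : mergeRows U P i j = P i j :=
  if_neg hi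

theorem nonneg (hP : ∀ i j, 0 ≤ P i j) (i : ι) (j : κ) : 0 ≤ mergeRows U P i j := by
  by_cases hi : i ∈ U
  · rw [apply_of_mem hi]
    exact mul_nonneg (rowSum_div_blockSum_nonneg hP U i) (Finset.sum_nonneg fun k _ => hP k j)
  · rw [apply_of_notMem hi]
    exact hP i j

theorem sum_row (hP : ∀ i j, 0 ≤ P i j) (i : ι) : ∑ j, mergeRows U P i j = ∑ j, P i j := by
  by_cases hi : i ∈ U
  · simp only [apply_of_mem hi, ← Finset.mul_sum]
    rw [Finset.sum_comm]
    refine div_mul_cancel_of_imp fun hmass => ?_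
    exact (Finset.sum_eq_zero_iff_of_nonneg fun k _ =>
      Finset.sum_nonneg fun l _ => hP k l).1 hmass i hi
  · simp only [apply_of_notMem hi]

theorem sum_col [Fintype ι] (hP : ∀ i j, 0 ≤ P i j) (j : κ) :
    ∑ i, mergeRows U P i j = ∑ i, P i j := by
  have hblock : ∑ i ∈ U, mergeRows U P i j = ∑ i ∈ U, P i j := by
    rw [Finset.sum_congr rfl fun i hi => apply_of_mem hi j, ← Finset.sum_mul, ← Finset.sum_div,
      div_mul_comm]
    refine div_mul_cancel_of_imp fun hmass => ?_
    have hcols : ∑ l, ∑ k ∈ U, P k l = 0 := Finset.sum_comm.trans hmass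
    exact (Finset.sum_eq_zero_iff_of_nonneg fun l _ =>
      Finset.sum_nonneg fun k _ => hP k l).1 hcols j (Finset.mem_univ j)
  have hrest : ∑ i ∈ Uᶜ, mergeRows U P i j = ∑ i ∈ Uᶜ, P i j :=
    Finset.sum_congr rfl fun i hi => apply_of_notMem (Finset.mem_compl.1 hi) j
  rw [← Finset.sum_add_sum_compl U, hblock, hrest, Finset.sum_add_sum_compl]

end Marginals

variable {n m : ℕ} {P : Matrix (Fin n) (Fin m) ℝ}

theorem mem_couplings {a : Fin n → ℝ} {b : Fin m → ℝ} (U : Finset (Fin n))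
    (hP : P ∈ couplings a b) : mergeRows U P ∈ couplings a b :=
  ⟨nonneg hP.1, fun i => (sum_row hP.1 i).trans (hP.2.1 i),
    fun j => (sum_col hP.1 j).trans (hP.2.2 j)⟩

theorem hasNNRankLE_card_compl_add_one (U : Finset (Fin n)) (hP : ∀ i j, 0 ≤ P i j) :
    hasNNRankLE (Uᶜ.card + 1) (mergeRows U P) := by
  -- The index `none` stands for the merged block, `some k` for the untouched row `k`.
  let u : Option (Uᶜ : Finset (Fin n)) → Fin n → ℝ := fun o i => o.elim
    (if i ∈ U then (∑ l, P i l) / ∑ k ∈ U, ∑ l, P k l else 0) (fun k => if i = k then 1 else 0)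
  let v : Option (Uᶜ : Finset (Fin n)) → Fin m → ℝ := fun o j => o.elim
    (∑ k ∈ U, P k j) (fun k => P k j)
  refine hasNNRankLE_of_eq_sum (u := u) (v := v)
    (by rw [Fintype.card_option, Fintype.card_coe]) ?_ ?_ fun i j => ?_
  · rintro (_ | k) i
    · exact ite_nonneg (rowSum_div_blockSum_nonneg hP U i) le_rfl
    · exact ite_nonneg zero_le_one le_rfl
  · rintro (_ | k) j
    · exact Finset.sum_nonneg fun k _ => hP k j
    · exact hP k j
  · have hrows : ∑ k : (Uᶜ : Finset (Fin n)), u (some k) i * v (some k) j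
        = if i ∈ U then 0 else P i j := by
      simp only [u, v, Option.elim_some, ite_mul, one_mul, zero_mul]
      rw [Finset.sum_coe_sort Uᶜ fun k => if i = k then P k j else 0, Finset.sum_ite_eq]
      simp only [Finset.mem_compl, ite_not]
    rw [Fintype.sum_option, hrows]
    by_cases hi : i ∈ U
    · simp [u, v, hi, apply_of_mem]
    · simp [u, v, hi, apply_of_notMem]

theorem frob_sub_frob_le {C : Matrix (Fin n) (Fin m) ℝ} {c d : ℝ} (U : Finset (Fin n))
    (hc : ∀ i j, c ≤ C i j) (hd : ∀ i j, C i j ≤ d) (hP : ∀ i j, 0 ≤ P i j) :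
    frob C (mergeRows U P) - frob C P ≤ (d - c) * ∑ i ∈ U, ∑ j, P i j := by
  let rowCost (Q : Matrix (Fin n) (Fin m) ℝ) (i : Fin n) : ℝ := ∑ j, C i j * Q i j
  have hrest : ∀ i, i ∉ U → rowCost (mergeRows U P) i - rowCost P i = 0 := fun i hi => by
    simp only [rowCost, apply_of_notMem hi, sub_self]
  calc frob C (mergeRows U P) - frob C P
      = ∑ i, (rowCost (mergeRows U P) i - rowCost P i) := Finset.sum_sub_distrib _ _ |>.symm
    _ = ∑ i ∈ U, (rowCost (mergeRows U P) i - rowCost P i) :=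
        (Finset.sum_subset U.subset_univ fun i _ hi => hrest i hi).symm
    _ ≤ ∑ i ∈ U, (d - c) * ∑ j, P i j := Finset.sum_le_sum fun i _ =>
        sum_mul_sub_sum_mul_le (hc i) (hd i) (hP i) (nonneg hP i) (sum_row hP i)
    _ = (d - c) * ∑ i ∈ U, ∑ j, P i j := (Finset.mul_sum _ _ _).symm

end mergeRows

section Approximation

variable {n m s : ℕ} {C P : Matrix (Fin n) (Fin m) ℝ} {a : Fin n → ℝ} {b : Fin m → ℝ} {c d : ℝ}

theorem exists_coupling_hasNNRankLE_succ_of_le_rows (hs : s ≤ n) (hc : ∀ i j, c ≤ C i j)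
    (hd : ∀ i j, C i j ≤ d) (hcd : c ≤ d) (hP : P ∈ couplings a b) :
    ∃ Q ∈ couplings a b, hasNNRankLE (s + 1) Q ∧
      frob C Q - frob C P ≤ (d - c) * ((n - s) / n * ∑ i, a i) := by
  obtain ⟨U, -, hUcard, hUmass⟩ :=
    exists_subset_card_eq_sum_le_mul_sum a (S := Finset.univ) (k := n - s) (by simp)
  have hUcompl : Uᶜ.card = s := by rw [Finset.card_compl, Fintype.card_fin]; omega
  rw [Finset.card_fin, Nat.cast_sub hs] at hUmass
  refine ⟨mergeRows U P, mergeRows.mem_couplings U hP,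
    hUcompl ▸ mergeRows.hasNNRankLE_card_compl_add_one U hP.1, ?_⟩
  calc frob C (mergeRows U P) - frob C P
      ≤ (d - c) * ∑ i ∈ U, ∑ j, P i j := mergeRows.frob_sub_frob_le U hc hd hP.1
    _ = (d - c) * ∑ i ∈ U, a i := by simp only [hP.2.1]
    _ ≤ (d - c) * ((n - s) / n * ∑ i, a i) :=
        mul_le_mul_of_nonneg_left hUmass (sub_nonneg.2 hcd)

theorem exists_coupling_hasNNRankLE_succ (hs : s ≤ min n m) (hc : ∀ i j, c ≤ C i j)
    (hd : ∀ i j, C i j ≤ d) (hcd : c ≤ d) (hP : P ∈ couplings a b) :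
    ∃ Q ∈ couplings a b, hasNNRankLE (s + 1) Q ∧
      frob C Q - frob C P ≤ (d - c) * (((min n m : ℕ) - s) / (min n m : ℕ) * ∑ i, a i) := by
  obtain ⟨hsn, hsm⟩ := le_min_iff.1 hs
  rcases le_total n m with hnm | hmn
  · rw [min_eq_left hnm]
    exact exists_coupling_hasNNRankLE_succ_of_le_rows hsn hc hd hcd hP
  · obtain ⟨Q, hQ, hrank, hcost⟩ := exists_coupling_hasNNRankLE_succ_of_le_rows (C := Cᵀ) hsm
      (fun j i => hc i j) (fun j i => hd i j) hcd (transpose_mem_couplings hP)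
    refine ⟨Qᵀ, transpose_mem_couplings hQ, hrank.transpose, ?_⟩
    rw [min_eq_right hmn, sum_eq_sum_of_mem_couplings hP]
    rwa [← transpose_transpose Q, frob_transpose, frob_transpose] at hcost

end Approximation

theorem stmt2_general {n m : ℕ} (r : ℕ) (hr : 1 ≤ r) (hrz : r ≤ min n m)
    (C : Matrix (Fin n) (Fin m) ℝ) (a : Fin n → ℝ) (b : Fin m → ℝ)
    (ha0 : ∀ i, 0 ≤ a i) (ha1 : ∑ i, a i = 1)
    (hb0 : ∀ j, 0 ≤ b j) (hb1 : ∑ j, b j = 1)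
    (Cmax Cmin : ℝ)
    (hCmax : IsGreatest {t : ℝ | ∃ p q, C p q = t} Cmax)
    (hCmin : IsLeast {t : ℝ | ∃ p q, C p q = t} Cmin) :
    0 ≤ sInf (frob C '' {P ∈ couplings a b | hasNNRankLE r P})
        - sInf (frob C '' couplings a b)
    ∧ sInf (frob C '' {P ∈ couplings a b | hasNNRankLE r P})
        - sInf (frob C '' couplings a b)
      ≤ (Cmax - Cmin) * (1 - ((r : ℝ) - 1) / (min n m : ℝ)) := by
  obtain ⟨s, rfl⟩ := Nat.exists_eq_add_of_le' hr
  have hz : ((min n m : ℕ) : ℝ) ≠ 0 := Nat.cast_ne_zero.2 (by omega)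
  refine sInf_image_sub_sInf_image_bounds (Set.sep_subset _ _)
    (couplings_nonempty ha0 ha1 hb0 hb1) (bddBelow_frob_image_couplings C) fun P hP => ?_
  obtain ⟨Q, hQ, hrank, hcost⟩ := exists_coupling_hasNNRankLE_succ (by omega : s ≤ min n m)
    (fun i j => hCmin.2 ⟨i, j, rfl⟩) (fun i j => hCmax.2 ⟨i, j, rfl⟩) (hCmin.2 hCmax.1) hP
  refine ⟨Q, ⟨hQ, hrank⟩, ?_⟩
  rwa [Nat.cast_succ, add_sub_cancel_right, ← Nat.cast_min, one_sub_div hz,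
    ← mul_one (_ / _), ← ha1]

/-- Low-rank approximation error for balanced optimal transport:
`0 ≤ inf_{Π_{a,b}(r)} ⟨C,P⟩ − inf_{Π_{a,b}} ⟨C,P⟩
    ≤ (max C − min C) · log (min(n,m)/(r−1))`. -/
theorem stmt2 {n m : ℕ} (hn : 0 < n) (hm : 0 < m) (r : ℕ)
    (hr2 : 2 ≤ r) (hrz : r ≤ min n m)
    (C : Matrix (Fin n) (Fin m) ℝ) (a : Fin n → ℝ) (b : Fin m → ℝ)
    (ha0 : ∀ i, 0 ≤ a i) (ha1 : ∑ i, a i = 1)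
    (hb0 : ∀ j, 0 ≤ b j) (hb1 : ∑ j, b j = 1)
    (Cmax Cmin : ℝ)
    (hCmax : IsGreatest {t : ℝ | ∃ p q, C p q = t} Cmax)
    (hCmin : IsLeast {t : ℝ | ∃ p q, C p q = t} Cmin) :
    0 ≤ sInf (frob C '' {P ∈ couplings a b | hasNNRankLE r P})
        - sInf (frob C '' couplings a b)
    ∧ sInf (frob C '' {P ∈ couplings a b | hasNNRankLE r P})
        - sInf (frob C '' couplings a b)
      ≤ (Cmax - Cmin) * Real.log ((min n m : ℝ) / ((r : ℝ) - 1)) := by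
  have hr : (0 : ℝ) < (r : ℝ) - 1 := sub_pos.2 (Nat.one_lt_cast.2 hr2)
  have hz : (0 : ℝ) < min (n : ℝ) m := lt_min (Nat.cast_pos.2 hn) (Nat.cast_pos.2 hm)
  exact (stmt2_general r (by omega) hrz C a b ha0 ha1 hb0 hb1 Cmax Cmin hCmax hCmin).imp_right
    fun h => h.trans <|
      mul_le_mul_of_nonneg_left (one_sub_div_le_log_div hr hz) (sub_nonneg.2 (hCmin.2 hCmax.1))
end

section
/- Let C ∈ ℝ^{n×m}, let z ≥ 1 and let r be an integer with 2 ≤ r ≤ z. Let b ∈ ℝ^m be entrywise nonnegative with c_b = Σ_{j=1}^m b_j > 0. Suppose P ∈ ℝ^{n×m} satisfies Pᵀ 1_n = b and admits a decomposition P = Σ_{k=1}^z λ_k q_k r_kᵀ, where λ_1 ≥ λ_2 ≥ ⋯ ≥ λ_z ≥ 0 and each q_k ∈ ℝ^n, r_k ∈ ℝ^m is entrywise nonnegative with Σ_i (q_k)_i = 1 and Σ_j (r_k)_j = 1. Then there exists a matrix P̃ ∈ ℝ^{n×m} that is a sum of at most r rank-one products u vᵀ of entrywise-nonnegative vectors,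 such that P̃ᵀ 1_n = b, P̃ 1_m = P 1_m, and ⟨C, P̃⟩_F − ⟨C, P⟩_F ≤ c_b · (max_{p,q} C_{pq} − min_{p,q} C_{pq}) · log(z/(r−1)). Explicitly, when s = Σ_{i=r}^z λ_i > 0 one may take P̃ = Σ_{i=1}^{r−1} λ_i q_i r_iᵀ + s · α_r β_rᵀ with α_r = (1/s) Σ_{i=r}^z λ_i q_i and β_r = (1/s) Σ_{i=r}^z λ_i r_i. -/
open Matrix

/-- The properties required of the rank-`r` approximation `P̃` of `P`:
it is a sum of at most `r` nonnegative rank-one products, has right marginal `b`,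
the same left marginal as `P`, and satisfies the cost bound. -/
def goodApprox {n m : ℕ} (r : ℕ) (C P : Matrix (Fin n) (Fin m) ℝ) (b : Fin m → ℝ)
    (bound : ℝ) (Pt : Matrix (Fin n) (Fin m) ℝ) : Prop :=
  (∃ (u : Fin r → Fin n → ℝ) (v : Fin r → Fin m → ℝ),
      (∀ k i, 0 ≤ u k i) ∧ (∀ k j, 0 ≤ v k j) ∧ ∀ i j, Pt i j = ∑ k, u k i * v k j) ∧
  (∀ j, ∑ i, Pt i j = b j) ∧
  (∀ i, ∑ j, Pt i j = ∑ j, P i j) ∧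
  frob C Pt - frob C P ≤ bound

/-!
Keep the `r - 1` heaviest terms of the decomposition and replace the remaining sum `T` by the
product of its marginals, scaled to the mass `s` of `T`. This is a single rank-one term with the
same row and column sums as `T`, so moving from `T` to it costs at most `s * (max C - min C)`.
Since the merged weights are the smallest ones, their total `s` is at most the fraction
`1 - (r - 1) / z` of the whole mass, and `1 - x⁻¹ ≤ log x` at `x = z / (r - 1)` gives the bound.
-/

variable {ι κ τ : Type*}

section SumCompl

lemma card_nsmul_sum_le_card_nsmul_sum {M : Type*} [AddCommMonoid M] [PartialOrder M]
    [IsOrderedAddMonoid M] {S T : Finset τ} {f : τ → M} (h : ∀ k ∈ S, ∀ l ∈ T, f l ≤ f k) :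
    S.card • ∑ l ∈ T, f l ≤ T.card • ∑ k ∈ S, f k :=
  calc S.card • ∑ l ∈ T, f l = ∑ _k ∈ S, ∑ l ∈ T, f l := by rw [Finset.sum_const]
    _ ≤ ∑ k ∈ S, ∑ _l ∈ T, f k := Finset.sum_le_sum fun k hk => Finset.sum_le_sum (h k hk)
    _ = T.card • ∑ k ∈ S, f k := by rw [Finset.sum_comm, Finset.sum_const]

variable [Fintype τ] [DecidableEq τ] {S : Finset τ} {f : τ → ℝ}

lemma card_mul_sum_compl_le (h : ∀ k ∈ S, ∀ l ∉ S, f l ≤ f k) :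
    Fintype.card τ * ∑ l ∈ Sᶜ, f l ≤ (Fintype.card τ - S.card) * ∑ k, f k := by
  have hexchange : S.card * ∑ l ∈ Sᶜ, f l ≤ Sᶜ.card * ∑ k ∈ S, f k := by
    simpa only [nsmul_eq_mul] using
      card_nsmul_sum_le_card_nsmul_sum fun k hk l hl => h k hk l (Finset.mem_compl.mp hl)
  have hcard : (S.card + Sᶜ.card : ℝ) = Fintype.card τ := mod_cast S.card_add_card_compl
  rw [← hcard, ← Finset.sum_add_sum_compl S f]
  linarith

lemma sum_compl_le_sum_mul_log (hS : S.Nonempty) (hf : 0 ≤ ∑ k, f k)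
    (h : ∀ k ∈ S, ∀ l ∉ S, f l ≤ f k) :
    ∑ l ∈ Sᶜ, f l ≤ (∑ k, f k) * Real.log (Fintype.card τ / S.card) := by
  have hS_pos : (0 : ℝ) < S.card := mod_cast hS.card_pos
  have hτ_pos : (0 : ℝ) < Fintype.card τ := mod_cast hS.card_pos.trans_le S.card_le_univ
  calc ∑ l ∈ Sᶜ, f l ≤ (Fintype.card τ - S.card) * (∑ k, f k) / Fintype.card τ :=
        (le_div_iff₀' hτ_pos).mpr (card_mul_sum_compl_le h)
    _ = (∑ k, f k) * (1 - (Fintype.card τ / S.card : ℝ)⁻¹) := by field_simp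
    _ ≤ (∑ k, f k) * Real.log (Fintype.card τ / S.card) := by
        gcongr
        exact Real.one_sub_inv_le_log_of_pos (div_pos hτ_pos hS_pos)

end SumCompl

section NonnegRank

/-- `M` has nonnegative rank at most `r`: it is a sum of `r` outer products of entrywise
nonnegative vectors (some of which may vanish). -/
def NonnegRankLE (r : ℕ) (M : Matrix ι κ ℝ) : Prop :=
  ∃ (u : Fin r → ι → ℝ) (v : Fin r → κ → ℝ),
    (∀ k i, 0 ≤ u k i) ∧ (∀ k j, 0 ≤ v k j) ∧ ∀ i j, M i j = ∑ k, u k i * v k j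

lemma NonnegRankLE.add {r s : ℕ} {M N : Matrix ι κ ℝ} (hM : NonnegRankLE r M)
    (hN : NonnegRankLE s N) : NonnegRankLE (r + s) (M + N) := by
  obtain ⟨u, v, hu, hv, huv⟩ := hM
  obtain ⟨u', v', hu', hv', huv'⟩ := hN
  refine ⟨Fin.append u u', Fin.append v v', fun k => ?_, fun k => ?_, fun i j => ?_⟩
  · cases k using Fin.addCases with
    | left k => simpa only [Fin.append_left] using hu k
    | right k => simpa only [Fin.append_right] using hu' k
  · cases k using Fin.addCases with
    | left k => simpa only [Fin.append_left] using hv k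
    | right k => simpa only [Fin.append_right] using hv' k
  · simp only [Matrix.add_apply, huv, huv', Fin.sum_univ_add, Fin.append_left, Fin.append_right]

end NonnegRank

section RankOneSum

/-- The weighted sum `∑ k ∈ S, w k • q k ⊗ p k` of outer products; the given decomposition of `P`
and the parts into which it is cut have this form. -/
def rankOneSum (S : Finset τ) (w : τ → ℝ) (q : τ → ι → ℝ) (p : τ → κ → ℝ) : Matrix ι κ ℝ :=
  of fun i j => ∑ k ∈ S, w k * q k i * p k j

variable {S : Finset τ} {w : τ → ℝ} {q : τ → ι → ℝ} {p : τ → κ → ℝ}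

lemma rankOneSum_nonneg (hw : ∀ k, 0 ≤ w k) (hq : ∀ k i, 0 ≤ q k i) (hp : ∀ k j, 0 ≤ p k j)
    (i : ι) (j : κ) : 0 ≤ rankOneSum S w q p i j :=
  Finset.sum_nonneg fun k _ => mul_nonneg (mul_nonneg (hw k) (hq k i)) (hp k j)

lemma nonnegRankLE_rankOneSum (hw : ∀ k, 0 ≤ w k) (hq : ∀ k i, 0 ≤ q k i)
    (hp : ∀ k j, 0 ≤ p k j) : NonnegRankLE S.card (rankOneSum S w q p) := by
  let e : Fin S.card ≃ S := S.equivFin.symm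
  refine ⟨fun k i => w (e k) * q (e k) i, fun k => p (e k),
    fun k i => mul_nonneg (hw _) (hq _ i), fun k => hp _, fun i j => ?_⟩
  rw [rankOneSum, of_apply, ← Finset.sum_coe_sort S,
    e.sum_comp fun k : S => w k * q k i * p k j]

lemma rankOneSum_add_compl [Fintype τ] [DecidableEq τ] (S : Finset τ) (w : τ → ℝ)
    (q : τ → ι → ℝ) (p : τ → κ → ℝ) :
    rankOneSum S w q p + rankOneSum Sᶜ w q p = rankOneSum Finset.univ w q p :=
  Matrix.ext fun _ _ => Finset.sum_add_sum_compl S _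

lemma sum_rankOneSum_row [Fintype κ] (hp : ∀ k, ∑ j, p k j = 1) (i : ι) :
    ∑ j, rankOneSum S w q p i j = ∑ k ∈ S, w k * q k i := by
  simp only [rankOneSum, of_apply]
  rw [Finset.sum_comm]
  simp only [← Finset.mul_sum, hp, mul_one]

lemma sum_rankOneSum_col [Fintype ι] (hq : ∀ k, ∑ i, q k i = 1) (j : κ) :
    ∑ i, rankOneSum S w q p i j = ∑ k ∈ S, w k * p k j := by
  simp only [rankOneSum, of_apply]
  rw [Finset.sum_comm]
  simp only [← Finset.mul_sum, ← Finset.sum_mul, hq, mul_one]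

lemma sum_sum_rankOneSum [Fintype ι] [Fintype κ] (hq : ∀ k, ∑ i, q k i = 1)
    (hp : ∀ k, ∑ j, p k j = 1) : ∑ i, ∑ j, rankOneSum S w q p i j = ∑ k ∈ S, w k := by
  simp only [sum_rankOneSum_row hp]
  rw [Finset.sum_comm]
  simp only [← Finset.mul_sum, hq, mul_one]

end RankOneSum

variable [Fintype ι] [Fintype κ]

section ProductOfMarginals

/-- The product of the marginals of `T`: the rank-one matrix `s • α ⊗ β`, where `s` is the total
mass of `T` and `α`, `β` are its row and column sums divided by `s`. When `s = 0` the convention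
`0⁻¹ = 0` makes it the zero matrix, which is then also `T` if `T` is nonnegative. -/
noncomputable def productOfMarginals (T : Matrix ι κ ℝ) : Matrix ι κ ℝ :=
  of fun i j => (∑ i', ∑ j', T i' j') *
    (((∑ i', ∑ j', T i' j')⁻¹ * ∑ j', T i j') * ((∑ i', ∑ j', T i' j')⁻¹ * ∑ i', T i' j))

lemma transpose_productOfMarginals (T : Matrix ι κ ℝ) :
    (productOfMarginals T)ᵀ = productOfMarginals Tᵀ := by
  ext j i
  simp only [productOfMarginals, transpose_apply, of_apply]
  rw [Finset.sum_comm (f := fun j' i' => T i' j')]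
  ring

variable {T : Matrix ι κ ℝ}

lemma nonnegRankLE_one_productOfMarginals (hT : ∀ i j, 0 ≤ T i j) :
    NonnegRankLE 1 (productOfMarginals T) := by
  have hrow (i : ι) : 0 ≤ ∑ j, T i j := Finset.sum_nonneg fun j _ => hT i j
  have hcol (j : κ) : 0 ≤ ∑ i, T i j := Finset.sum_nonneg fun i _ => hT i j
  have hmass : 0 ≤ ∑ i, ∑ j, T i j := Finset.sum_nonneg fun i _ => hrow i
  refine ⟨fun _ i => (∑ i', ∑ j', T i' j') * ((∑ i', ∑ j', T i' j')⁻¹ * ∑ j', T i j'),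
    fun _ j => (∑ i', ∑ j', T i' j')⁻¹ * ∑ i', T i' j,
    fun _ i => mul_nonneg hmass (mul_nonneg (inv_nonneg.mpr hmass) (hrow i)),
    fun _ j => mul_nonneg (inv_nonneg.mpr hmass) (hcol j), fun i j => ?_⟩
  rw [Fin.sum_univ_one, mul_assoc, productOfMarginals, of_apply]

lemma productOfMarginals_nonneg (hT : ∀ i j, 0 ≤ T i j) (i : ι) (j : κ) :
    0 ≤ productOfMarginals T i j := by
  obtain ⟨u, v, hu, hv, huv⟩ := nonnegRankLE_one_productOfMarginals hT
  rw [huv]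
  exact Finset.sum_nonneg fun k _ => mul_nonneg (hu k i) (hv k j)

lemma sum_productOfMarginals_row (hT : ∀ i j, 0 ≤ T i j) (i : ι) :
    ∑ j, productOfMarginals T i j = ∑ j, T i j := by
  have hrow (i : ι) : 0 ≤ ∑ j, T i j := Finset.sum_nonneg fun j _ => hT i j
  simp only [productOfMarginals, of_apply, ← Finset.mul_sum]
  rw [Finset.sum_comm (f := fun j i => T i j)]
  rcases eq_or_ne (∑ i, ∑ j, T i j) 0 with hzero | hne
  · have hrow_zero : ∑ j, T i j = 0 :=
      (Finset.sum_eq_zero_iff_of_nonneg fun i _ => hrow i).mp hzero i (Finset.mem_univ i)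
    rw [hzero, hrow_zero, zero_mul]
  · field_simp

lemma sum_productOfMarginals_col (hT : ∀ i j, 0 ≤ T i j) (j : κ) :
    ∑ i, productOfMarginals T i j = ∑ i, T i j := by
  have hrow := sum_productOfMarginals_row (T := Tᵀ) (fun j i => hT i j) j
  rwa [← transpose_productOfMarginals] at hrow

end ProductOfMarginals

lemma sum_mul_sub_sum_mul_le_s3 {C U T : Matrix ι κ ℝ} {a b s : ℝ} (ha : ∀ i j, a ≤ C i j)
    (hb : ∀ i j, C i j ≤ b) (hU : ∀ i j, 0 ≤ U i j) (hT : ∀ i j, 0 ≤ T i j)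
    (hUs : ∑ i, ∑ j, U i j = s) (hTs : ∑ i, ∑ j, T i j = s) :
    ∑ i, ∑ j, C i j * U i j - ∑ i, ∑ j, C i j * T i j ≤ s * (b - a) := by
  have hupper : ∑ i, ∑ j, C i j * U i j ≤ b * s := by
    rw [← hUs]
    simp only [Finset.mul_sum]
    gcongr with i _ j _
    exacts [hU i j, hb i j]
  have hlower : a * s ≤ ∑ i, ∑ j, C i j * T i j := by
    rw [← hTs]
    simp only [Finset.mul_sum]
    gcongr with i _ j _
    exacts [hT i j, ha i j]
  linarith

section MergeCompl

variable [Fintype τ] [DecidableEq τ]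

/-- The approximation of `rankOneSum Finset.univ w q p` that keeps the terms indexed by `S` and
merges all others into the product of the marginals of their sum. -/
noncomputable def mergeCompl (S : Finset τ) (w : τ → ℝ) (q : τ → ι → ℝ) (p : τ → κ → ℝ) :
    Matrix ι κ ℝ :=
  rankOneSum S w q p + productOfMarginals (rankOneSum Sᶜ w q p)

variable {S : Finset τ} {w : τ → ℝ} {q : τ → ι → ℝ} {p : τ → κ → ℝ}

lemma mergeCompl_eq_of (hq : ∀ k, ∑ i, q k i = 1) (hp : ∀ k, ∑ j, p k j = 1) :
    mergeCompl S w q p = of fun i j => (∑ k ∈ S, w k * q k i * p k j) + (∑ k ∈ Sᶜ, w k) *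
      (((∑ k ∈ Sᶜ, w k)⁻¹ * ∑ k ∈ Sᶜ, w k * q k i) *
        ((∑ k ∈ Sᶜ, w k)⁻¹ * ∑ k ∈ Sᶜ, w k * p k j)) := by
  ext i j
  have hmass : ∑ i', ∑ j', rankOneSum Sᶜ w q p i' j' = ∑ k ∈ Sᶜ, w k := sum_sum_rankOneSum hq hp
  simp only [mergeCompl, productOfMarginals, Matrix.add_apply, of_apply, hmass]
  simp only [sum_rankOneSum_row hp, sum_rankOneSum_col hq]
  rfl

lemma nonnegRankLE_mergeCompl (hw : ∀ k, 0 ≤ w k) (hq : ∀ k i, 0 ≤ q k i)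
    (hp : ∀ k j, 0 ≤ p k j) : NonnegRankLE (S.card + 1) (mergeCompl S w q p) :=
  (nonnegRankLE_rankOneSum hw hq hp).add
    (nonnegRankLE_one_productOfMarginals (rankOneSum_nonneg hw hq hp))

lemma sum_mergeCompl_row (hw : ∀ k, 0 ≤ w k) (hq : ∀ k i, 0 ≤ q k i)
    (hp : ∀ k j, 0 ≤ p k j) (i : ι) :
    ∑ j, mergeCompl S w q p i j = ∑ j, rankOneSum Finset.univ w q p i j := by
  simp only [mergeCompl, ← rankOneSum_add_compl S, Matrix.add_apply, Finset.sum_add_distrib,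
    sum_productOfMarginals_row (rankOneSum_nonneg hw hq hp)]

lemma sum_mergeCompl_col (hw : ∀ k, 0 ≤ w k) (hq : ∀ k i, 0 ≤ q k i)
    (hp : ∀ k j, 0 ≤ p k j) (j : κ) :
    ∑ i, mergeCompl S w q p i j = ∑ i, rankOneSum Finset.univ w q p i j := by
  simp only [mergeCompl, ← rankOneSum_add_compl S, Matrix.add_apply, Finset.sum_add_distrib,
    sum_productOfMarginals_col (rankOneSum_nonneg hw hq hp)]

lemma mergeCompl_cost_sub_le {C : Matrix ι κ ℝ} {a b : ℝ} (ha : ∀ i j, a ≤ C i j)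
    (hb : ∀ i j, C i j ≤ b) (hw : ∀ k, 0 ≤ w k) (hq : ∀ k i, 0 ≤ q k i)
    (hp : ∀ k j, 0 ≤ p k j) (hq1 : ∀ k, ∑ i, q k i = 1) (hp1 : ∀ k, ∑ j, p k j = 1) :
    ∑ i, ∑ j, C i j * mergeCompl S w q p i j -
      ∑ i, ∑ j, C i j * rankOneSum Finset.univ w q p i j ≤ (∑ k ∈ Sᶜ, w k) * (b - a) := by
  have hT : ∀ i j, 0 ≤ rankOneSum Sᶜ w q p i j := rankOneSum_nonneg hw hq hp
  have hmass : ∑ i, ∑ j, rankOneSum Sᶜ w q p i j = ∑ k ∈ Sᶜ, w k := sum_sum_rankOneSum hq1 hp1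
  simp only [mergeCompl, ← rankOneSum_add_compl S, Matrix.add_apply, mul_add,
    Finset.sum_add_distrib, add_sub_add_left_eq_sub]
  refine sum_mul_sub_sum_mul_le_s3 ha hb (productOfMarginals_nonneg hT) hT ?_ hmass
  simpa only [sum_productOfMarginals_row hT] using hmass

lemma goodApprox_mergeCompl {n m : ℕ} {C : Matrix (Fin n) (Fin m) ℝ} {a b : ℝ}
    {q : τ → Fin n → ℝ} {p : τ → Fin m → ℝ} (hS : S.Nonempty) (hab : a ≤ b)
    (ha : ∀ i j, a ≤ C i j) (hb : ∀ i j, C i j ≤ b) (hw : ∀ k, 0 ≤ w k)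
    (hwS : ∀ k ∈ S, ∀ l ∉ S, w l ≤ w k) (hq : ∀ k i, 0 ≤ q k i) (hp : ∀ k j, 0 ≤ p k j)
    (hq1 : ∀ k, ∑ i, q k i = 1) (hp1 : ∀ k, ∑ j, p k j = 1) :
    goodApprox (S.card + 1) C (rankOneSum Finset.univ w q p)
      (fun j => ∑ i, rankOneSum Finset.univ w q p i j)
      ((∑ k, w k) * (b - a) * Real.log (Fintype.card τ / S.card)) (mergeCompl S w q p) := by
  refine ⟨nonnegRankLE_mergeCompl hw hq hp, sum_mergeCompl_col hw hq hp,
    sum_mergeCompl_row hw hq hp, ?_⟩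
  calc _ ≤ (∑ k ∈ Sᶜ, w k) * (b - a) := mergeCompl_cost_sub_le ha hb hw hq hp hq1 hp1
    _ ≤ (∑ k, w k) * Real.log (Fintype.card τ / S.card) * (b - a) :=
        mul_le_mul_of_nonneg_right
          (sum_compl_le_sum_mul_log hS (Finset.sum_nonneg fun k _ => hw k) hwS)
          (sub_nonneg.mpr hab)
    _ = (∑ k, w k) * (b - a) * Real.log (Fintype.card τ / S.card) := mul_right_comm _ _ _

end MergeCompl

/-- Low-rank approximation with a marginal constraint. Under the stated
decomposition hypotheses there is a rank-`r` nonnegative approximation `P̃` of `P` with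
`P̃ᵀ 1 = b`, `P̃ 1 = P 1` and
`⟨C,P̃⟩ − ⟨C,P⟩ ≤ c_b (max C − min C) log (z/(r−1))`; when `s = Σ_{i=r}^z λ_i > 0` the
explicit matrix `Σ_{i<r-1} λ_i q_i r_iᵀ + s α_r β_rᵀ` works. -/
theorem stmt3 {n m : ℕ} (z r : ℕ) (hz : 1 ≤ z) (hr2 : 2 ≤ r) (hrz : r ≤ z)
    (C : Matrix (Fin n) (Fin m) ℝ)
    (b : Fin m → ℝ) (hb : ∀ j, 0 ≤ b j)
    (cb : ℝ) (hcb : cb = ∑ j, b j) (hcbpos : 0 < cb)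
    (Cmax Cmin : ℝ)
    (hCmax : IsGreatest {t : ℝ | ∃ p q, C p q = t} Cmax)
    (hCmin : IsLeast {t : ℝ | ∃ p q, C p q = t} Cmin)
    (P : Matrix (Fin n) (Fin m) ℝ) (hPb : ∀ j, ∑ i, P i j = b j)
    (lam : Fin z → ℝ) (q : Fin z → Fin n → ℝ) (rv : Fin z → Fin m → ℝ)
    (hlam_mono : ∀ k l : Fin z, k ≤ l → lam l ≤ lam k)
    (hlam_nonneg : ∀ k, 0 ≤ lam k)
    (hq0 : ∀ k i, 0 ≤ q k i) (hrv0 : ∀ k j, 0 ≤ rv k j)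
    (hq1 : ∀ k, ∑ i, q k i = 1) (hrv1 : ∀ k, ∑ j, rv k j = 1)
    (hP : ∀ i j, P i j = ∑ k, lam k * q k i * rv k j) :
    (∃ Pt : Matrix (Fin n) (Fin m) ℝ,
      goodApprox r C P b
        (cb * (Cmax - Cmin) * Real.log ((z : ℝ) / ((r : ℝ) - 1))) Pt) ∧
    (0 < ∑ k ∈ Finset.univ.filter (fun k : Fin z => r - 1 ≤ (k : ℕ)), lam k →
      goodApprox r C P b
        (cb * (Cmax - Cmin) * Real.log ((z : ℝ) / ((r : ℝ) - 1)))
        (Matrix.of fun i j =>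
          (∑ k ∈ Finset.univ.filter (fun k : Fin z => (k : ℕ) < r - 1),
              lam k * q k i * rv k j)
          + (∑ k ∈ Finset.univ.filter (fun k : Fin z => r - 1 ≤ (k : ℕ)), lam k) *
            (((∑ k ∈ Finset.univ.filter (fun k : Fin z => r - 1 ≤ (k : ℕ)), lam k)⁻¹ *
                ∑ k ∈ Finset.univ.filter (fun k : Fin z => r - 1 ≤ (k : ℕ)), lam k * q k i) *
             ((∑ k ∈ Finset.univ.filter (fun k : Fin z => r - 1 ≤ (k : ℕ)), lam k)⁻¹ *
                ∑ k ∈ Finset.univ.filter (fun k : Fin z => r - 1 ≤ (k : ℕ)), lam k * rv k j)))) := by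
  let S : Finset (Fin z) := {k | (k : ℕ) < r - 1}
  have hSc : ({k | r - 1 ≤ (k : ℕ)} : Finset (Fin z)) = Sᶜ := by
    simp only [S, Finset.compl_filter, not_lt]
  have hcard : S.card = r - 1 := by rw [Fin.card_filter_val_lt]; omega
  have hS : S.Nonempty := Finset.card_pos.mp (by omega)
  have hlam_S : ∀ k ∈ S, ∀ l ∉ S, lam l ≤ lam k := fun k hk l hl =>
    hlam_mono k l (by simp only [S, Finset.mem_filter_univ] at hk hl; omega)
  obtain rfl : P = rankOneSum Finset.univ lam q rv := Matrix.ext hP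
  obtain rfl : (fun j => ∑ i, rankOneSum Finset.univ lam q rv i j) = b := funext hPb
  have hmass : cb = ∑ k, lam k :=
    hcb.trans (Finset.sum_comm.trans (sum_sum_rankOneSum hq1 hrv1))
  have hgood := goodApprox_mergeCompl hS (hCmin.2 hCmax.1) (fun i j => hCmin.2 ⟨i, j, rfl⟩)
    (fun i j => hCmax.2 ⟨i, j, rfl⟩) hlam_nonneg hlam_S hq0 hrv0 hq1 hrv1
  rw [hcard, Nat.sub_add_cancel (by omega), ← hmass, Fintype.card_fin,
    Nat.cast_pred (by omega)] at hgood
  rw [hSc, ← mergeCompl_eq_of hq1 hrv1]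
  exact ⟨⟨_, hgood⟩, fun _ => hgood⟩
end

section
/- Let a ∈ Δ_n, and let Q ∈ ℝ^{n×r_1}, R ∈ ℝ^{m×r_2}, T ∈ ℝ^{r_1×r_2} be entrywise nonnegative with Q 1_{r_1} = a, g_Q := Qᵀ 1_n and g_R := Rᵀ 1_m entrywise positive, T 1_{r_2} = g_Q, and Tᵀ 1_{r_1} = g_R. Define Q' = Q diag(1/g_Q) T. Then Q' is entrywise nonnegative, Q' 1_{r_2} = a, (Q')ᵀ 1_n = g_R, and Q diag(1/g_Q) T diag(1/g_R) Rᵀ = Q' diag(1/g_R) Rᵀ. Hence every latent-coupling factorization can be converted into a factorization of the form Q' diag(1/g_R) Rᵀ in which both factors Q' and R have inner marginal g_R. -/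
open Matrix

/-
Multiplying by `diag(1/g)` turns the vector `g` into the all-ones vector. Hence in
`A diag(1/g) B` the vector `v` is absorbed by `B` whenever `B v = g`, leaving `A 1`.
With `g = g_Q`, reading `Q diag(1/g_Q) T` from the right with `T 1 = g_Q` gives its row sums, and
reading the transpose `Tᵀ diag(1/g_Q) Qᵀ` from the right with `Qᵀ 1 = g_Q` gives its column sums.
-/

variable {m n k l 𝕜 : Type*}

theorem matrix_mul_apply_nonneg [Fintype n] [Semiring 𝕜] [PartialOrder 𝕜] [IsOrderedRing 𝕜]
    {A : Matrix m n 𝕜} {B : Matrix n k 𝕜} (hA : ∀ i j, 0 ≤ A i j) (hB : ∀ i j, 0 ≤ B i j)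
    (i : m) (j : k) : 0 ≤ (A * B) i j :=
  dotProduct_nonneg_of_nonneg (hA i) fun x => hB x j

theorem diagonal_inv_mulVec_self [Fintype n] [DecidableEq n] [DivisionSemiring 𝕜] {g : n → 𝕜}
    (hg : ∀ i, g i ≠ 0) : diagonal g⁻¹ *ᵥ g = 1 := by
  funext i
  rw [mulVec_diagonal]
  exact inv_mul_cancel₀ (hg i)

theorem mul_diagonal_inv_mul_mulVec [Fintype n] [Fintype k] [DecidableEq n] [DivisionSemiring 𝕜]
    {A : Matrix m n 𝕜} {B : Matrix n k 𝕜} {g : n → 𝕜} {v : k → 𝕜} (hg : ∀ i, g i ≠ 0)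
    (hB : B *ᵥ v = g) : (A * diagonal g⁻¹ * B) *ᵥ v = A *ᵥ 1 := by
  rw [← mulVec_mulVec, hB, ← mulVec_mulVec, diagonal_inv_mulVec_self hg]

/-- The inner marginal `g_Q = Qᵀ 1` of a factor `Q`: the vector of its column sums. -/
def innerMarginal [Fintype m] [NonAssocSemiring 𝕜] (Q : Matrix m n 𝕜) : n → 𝕜 :=
  Qᵀ *ᵥ 1

/-- The factor `Q' = Q diag(1/g_Q) T` obtained by absorbing the latent coupling `T` into `Q`.
It is meaningful when the inner marginal of `Q` has no zero entry, since `0⁻¹ = 0`. -/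
def absorbCoupling [Fintype m] [Fintype n] [DecidableEq n] [DivisionSemiring 𝕜]
    (Q : Matrix m n 𝕜) (T : Matrix n k 𝕜) : Matrix m k 𝕜 :=
  Q * diagonal (innerMarginal Q)⁻¹ * T

theorem innerMarginal_nonneg [Fintype m] [Semiring 𝕜] [PartialOrder 𝕜] [IsOrderedRing 𝕜]
    {Q : Matrix m n 𝕜} (hQ : ∀ i j, 0 ≤ Q i j) : 0 ≤ innerMarginal Q :=
  fun j => dotProduct_nonneg_of_nonneg (hQ · j) zero_le_one

section absorbCoupling

variable [Fintype m] [Fintype n] [DecidableEq n] {Q : Matrix m n 𝕜} {T : Matrix n k 𝕜}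

theorem absorbCoupling_nonneg [Semifield 𝕜] [LinearOrder 𝕜] [IsStrictOrderedRing 𝕜]
    (hQ : ∀ i j, 0 ≤ Q i j) (hT : ∀ i j, 0 ≤ T i j) (i : m) (j : k) :
    0 ≤ absorbCoupling Q T i j := by
  have hD (x y : n) : 0 ≤ diagonal (innerMarginal Q)⁻¹ x y := by
    rw [diagonal_apply]
    split_ifs
    exacts [inv_nonneg.mpr (innerMarginal_nonneg hQ x), le_rfl]
  exact matrix_mul_apply_nonneg (matrix_mul_apply_nonneg hQ hD) hT i j

theorem absorbCoupling_mulVec_one [Fintype k] [DivisionSemiring 𝕜]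
    (hgQ : ∀ i, innerMarginal Q i ≠ 0) (hT : T *ᵥ 1 = innerMarginal Q) :
    absorbCoupling Q T *ᵥ 1 = Q *ᵥ 1 :=
  mul_diagonal_inv_mul_mulVec hgQ hT

theorem innerMarginal_absorbCoupling [Semifield 𝕜] (hgQ : ∀ i, innerMarginal Q i ≠ 0) :
    innerMarginal (absorbCoupling Q T) = innerMarginal T := by
  have transpose_eq : (absorbCoupling Q T)ᵀ = Tᵀ * diagonal (innerMarginal Q)⁻¹ * Qᵀ := by
    rw [absorbCoupling, transpose_mul, transpose_mul, diagonal_transpose, Matrix.mul_assoc]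
  rw [innerMarginal, transpose_eq, mul_diagonal_inv_mul_mulVec hgQ rfl, innerMarginal]

end absorbCoupling

theorem stmt11_general [Fintype m] [Fintype n] [Fintype k] [Fintype l] [DecidableEq n]
    [DecidableEq l] [Semifield 𝕜] [LinearOrder 𝕜] [IsStrictOrderedRing 𝕜]
    {Q : Matrix m n 𝕜} {R : Matrix k l 𝕜} {T : Matrix n l 𝕜}
    (hQ : ∀ i j, 0 ≤ Q i j) (hT : ∀ i j, 0 ≤ T i j)
    (hgQ : ∀ i, 0 < innerMarginal Q i) (_hgR : ∀ j, 0 < innerMarginal R j)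
    (hTQ : T *ᵥ 1 = innerMarginal Q) (hTR : innerMarginal T = innerMarginal R) :
    (∀ i j, 0 ≤ absorbCoupling Q T i j) ∧
    absorbCoupling Q T *ᵥ 1 = Q *ᵥ 1 ∧
    innerMarginal (absorbCoupling Q T) = innerMarginal R ∧
    Q * diagonal (innerMarginal Q)⁻¹ * T * diagonal (innerMarginal R)⁻¹ * Rᵀ
      = absorbCoupling Q T * diagonal (innerMarginal R)⁻¹ * Rᵀ :=
  have hgQ_ne i : innerMarginal Q i ≠ 0 := (hgQ i).ne'
  ⟨absorbCoupling_nonneg hQ hT, absorbCoupling_mulVec_one hgQ_ne hTQ,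
    (innerMarginal_absorbCoupling hgQ_ne).trans hTR, rfl⟩

/-- Diagonalization of the latent coupling: with `Q' = Q diag(1/g_Q) T`,
the matrix `Q'` is entrywise nonnegative, `Q' 1 = a`, `(Q')ᵀ 1 = g_R`, and the
latent-coupling product equals `Q' diag(1/g_R) Rᵀ`. -/
theorem stmt11 {n m r₁ r₂ : ℕ} (a : Fin n → ℝ)
    (ha0 : ∀ i, 0 ≤ a i) (ha1 : ∑ i, a i = 1)
    (Q : Matrix (Fin n) (Fin r₁) ℝ) (R : Matrix (Fin m) (Fin r₂) ℝ)
    (T : Matrix (Fin r₁) (Fin r₂) ℝ)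
    (hQ0 : ∀ i k, 0 ≤ Q i k) (hR0 : ∀ j l, 0 ≤ R j l) (hT0 : ∀ k l, 0 ≤ T k l)
    (hQ1 : Q *ᵥ (fun _ => 1) = a)
    (gQ : Fin r₁ → ℝ) (hgQ : gQ = Qᵀ *ᵥ (fun _ => 1))
    (gR : Fin r₂ → ℝ) (hgR : gR = Rᵀ *ᵥ (fun _ => 1))
    (hgQpos : ∀ k, 0 < gQ k) (hgRpos : ∀ l, 0 < gR l)
    (hT1 : T *ᵥ (fun _ => 1) = gQ) (hT2 : Tᵀ *ᵥ (fun _ => 1) = gR) :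
    (∀ i l, 0 ≤ (Q * Matrix.diagonal (fun k => (gQ k)⁻¹) * T) i l) ∧
    ((Q * Matrix.diagonal (fun k => (gQ k)⁻¹) * T) *ᵥ (fun _ => 1) = a) ∧
    ((Q * Matrix.diagonal (fun k => (gQ k)⁻¹) * T)ᵀ *ᵥ (fun _ => 1) = gR) ∧
    (Q * Matrix.diagonal (fun k => (gQ k)⁻¹) * T * Matrix.diagonal (fun l => (gR l)⁻¹) * Rᵀ
      = (Q * Matrix.diagonal (fun k => (gQ k)⁻¹) * T) *
          Matrix.diagonal (fun l => (gR l)⁻¹) * Rᵀ) := by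
  subst hQ1 hgQ hgR
  exact stmt11_general hQ0 hT0 hgQpos hgRpos hT1 hT2
end

section
/- Let δ > 0, C ∈ ℝ^{n×m}, let R ∈ ℝ^{m×r_2} and T ∈ ℝ^{r_1×r_2} be entrywise nonnegative with Σ_{ij} R_{ij} ≤ 1 and Σ_{ij} T_{ij} ≤ 1, and let g, g̃ ∈ ℝ^{r_1} and g_R ∈ ℝ^{r_2} have all entries at least δ. Then ‖C R (diag(1/g) T diag(1/g_R))ᵀ − C R (diag(1/g̃) T diag(1/g_R))ᵀ‖_F ≤ (‖C‖_F / δ³) · ‖g − g̃‖_2. That is, the linearized mirror-descent gradient C R Xᵀ with X = diag(1/g) T diag(1/g_R) is Lipschitz in the inner marginal g with constant ‖C‖_F/δ³ on the region where all inner-marginal entries are bounded below by δ. -/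
open Matrix

/-!
The gradient is `C (R diag(1/g_R)) Tᵀ diag(1/g)`, hence linear in the entrywise inverse of `g`.
Submultiplicativity of the Frobenius norm then splits the bound into `‖C‖ ‖R‖ / δ` from the factor
`diag(1/g_R)`, `‖T‖`, and `‖1/g - 1/g'‖ ≤ ‖g - g'‖ / δ²`. The norms of `R` and `T` drop out because
the Frobenius norm is dominated by the entrywise `ℓ¹` norm.
-/

theorem norm_inv_sub_inv_le {K : Type*} [NormedDivisionRing K] {δ : ℝ} (hδ : 0 < δ) {a b : K}
    (ha : δ ≤ ‖a‖) (hb : δ ≤ ‖b‖) : ‖a⁻¹ - b⁻¹‖ ≤ (δ ^ 2)⁻¹ * ‖a - b‖ := by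
  have ha₀ : a ≠ 0 := norm_pos_iff.1 (hδ.trans_le ha)
  have hb₀ : b ≠ 0 := norm_pos_iff.1 (hδ.trans_le hb)
  rw [← dist_eq_norm, dist_inv_inv₀ ha₀ hb₀, dist_eq_norm, inv_mul_eq_div, sq]
  gcongr

section Frobenius

open scoped Matrix.Norms.Frobenius

variable {l m n p : Type*} [Fintype m] [Fintype n] [Fintype p]

theorem frobenius_norm_eq_sqrt {E : Type*} [SeminormedAddCommGroup E] (A : Matrix m n E) :
    ‖A‖ = √(∑ i, ∑ j, ‖A i j‖ ^ 2) := by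
  simp only [frobenius_norm_def, Real.sqrt_eq_rpow, Real.rpow_two]

theorem frobenius_norm_le_sum_norm {E : Type*} [SeminormedAddCommGroup E] (A : Matrix m n E) :
    ‖A‖ ≤ ∑ i, ∑ j, ‖A i j‖ := by
  rw [frobenius_norm_eq_sqrt, ← Fintype.sum_prod_type', ← Fintype.sum_prod_type']
  exact Real.sqrt_le_iff.2 ⟨Finset.sum_nonneg fun _ _ => norm_nonneg _,
    Finset.sum_sq_le_sq_sum_of_nonneg fun _ _ => norm_nonneg _⟩

theorem frobenius_norm_le_one_of_nonneg_of_sum_le_one {A : Matrix m n ℝ}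
    (hA : ∀ i j, 0 ≤ A i j) (hsum : ∑ i, ∑ j, A i j ≤ 1) : ‖A‖ ≤ 1 := by
  refine (frobenius_norm_le_sum_norm A).trans ?_
  simpa only [Real.norm_of_nonneg (hA _ _)] using hsum

theorem frobenius_norm_le_mul_of_forall_norm_le {E F : Type*} [SeminormedAddCommGroup E]
    [SeminormedAddCommGroup F] {A : Matrix m n E} {B : Matrix m n F} {c : ℝ} (hc : 0 ≤ c)
    (h : ∀ i j, ‖A i j‖ ≤ c * ‖B i j‖) : ‖A‖ ≤ c * ‖B‖ := by
  rw [frobenius_norm_eq_sqrt, frobenius_norm_eq_sqrt, Real.sqrt_le_left (by positivity), mul_pow,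
    Real.sq_sqrt (by positivity)]
  simp only [Finset.mul_sum, ← mul_pow]
  gcongr with i _ j _
  exact h i j

theorem frobenius_norm_mul_diagonal_inv_le {K : Type*} [NormedDivisionRing K] [DecidableEq n]
    {δ : ℝ} (hδ : 0 < δ) (A : Matrix m n K) {v : n → K} (hv : ∀ j, δ ≤ ‖v j‖) :
    ‖A * diagonal fun j => (v j)⁻¹‖ ≤ δ⁻¹ * ‖A‖ := by
  refine frobenius_norm_le_mul_of_forall_norm_le (by positivity) fun i j => ?_
  rw [mul_diagonal, norm_mul, norm_inv, mul_comm]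
  gcongr
  exact hv j

theorem frobenius_norm_diagonal_inv_sub_diagonal_inv_le {K : Type*} [NormedDivisionRing K]
    [DecidableEq n] {δ : ℝ} (hδ : 0 < δ) {v w : n → K} (hv : ∀ i, δ ≤ ‖v i‖)
    (hw : ∀ i, δ ≤ ‖w i‖) :
    ‖(diagonal fun i => (v i)⁻¹) - diagonal fun i => (w i)⁻¹‖
      ≤ (δ ^ 2)⁻¹ * ‖WithLp.toLp 2 (v - w)‖ := by
  rw [diagonal_sub, ← frobenius_norm_diagonal]
  refine frobenius_norm_le_mul_of_forall_norm_le (by positivity) fun i j => ?_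
  obtain rfl | hij := eq_or_ne i j
  · simpa only [diagonal_apply_eq] using! norm_inv_sub_inv_le hδ (hv i) (hw i)
  · simp only [diagonal_apply_ne _ hij, norm_zero, mul_zero, le_refl]

/-- The linearized mirror-descent gradient `C R Xᵀ`, where `X = diag(1/g) T diag(1/g_R)`. The inner
marginal `g` is the last argument, being the variable in which the Lipschitz bound is taken. -/
def linearizedGradient {K : Type*} [Field K] [DecidableEq n] [DecidableEq p] (C : Matrix l m K)
    (R : Matrix m n K) (T : Matrix p n K) (gR : n → K) (g : p → K) : Matrix l p K :=
  C * R * ((diagonal fun i => (g i)⁻¹) * T * diagonal fun j => (gR j)⁻¹)ᵀ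

theorem linearizedGradient_eq_mul_diagonal_inv {K : Type*} [Field K] [DecidableEq n]
    [DecidableEq p] (C : Matrix l m K) (R : Matrix m n K) (T : Matrix p n K) (gR : n → K)
    (g : p → K) :
    linearizedGradient C R T gR g
      = C * (R * diagonal fun j => (gR j)⁻¹) * Tᵀ * diagonal fun i => (g i)⁻¹ := by
  simp only [linearizedGradient, transpose_mul, diagonal_transpose, Matrix.mul_assoc]

theorem frobenius_norm_linearizedGradient_sub_le {𝕜 : Type*} [RCLike 𝕜] [Fintype l]
    [DecidableEq n] [DecidableEq p] {δ : ℝ} (hδ : 0 < δ)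
    (C : Matrix l m 𝕜) (R : Matrix m n 𝕜) (T : Matrix p n 𝕜) {gR : n → 𝕜} {g g' : p → 𝕜}
    (hgR : ∀ j, δ ≤ ‖gR j‖) (hg : ∀ i, δ ≤ ‖g i‖) (hg' : ∀ i, δ ≤ ‖g' i‖) :
    ‖linearizedGradient C R T gR g - linearizedGradient C R T gR g'‖
      ≤ ‖C‖ * ‖R‖ * ‖T‖ / δ ^ 3 * ‖WithLp.toLp 2 (g - g')‖ := by
  rw [linearizedGradient_eq_mul_diagonal_inv, linearizedGradient_eq_mul_diagonal_inv,
    ← Matrix.mul_sub]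
  set S := R * diagonal fun j => (gR j)⁻¹
  set D := (diagonal fun i => (g i)⁻¹) - diagonal fun i => (g' i)⁻¹
  have hS : ‖S‖ ≤ δ⁻¹ * ‖R‖ := frobenius_norm_mul_diagonal_inv_le hδ R hgR
  have hD : ‖D‖ ≤ (δ ^ 2)⁻¹ * ‖WithLp.toLp 2 (g - g')‖ :=
    frobenius_norm_diagonal_inv_sub_diagonal_inv_le hδ hg hg'
  calc ‖C * S * Tᵀ * D‖
      ≤ ‖C * S * Tᵀ‖ * ‖D‖ := frobenius_norm_mul _ _
    _ ≤ ‖C * S‖ * ‖Tᵀ‖ * ‖D‖ := by gcongr; exact frobenius_norm_mul _ _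
    _ ≤ ‖C‖ * ‖S‖ * ‖T‖ * ‖D‖ := by
      rw [frobenius_norm_transpose]
      gcongr
      exact frobenius_norm_mul _ _
    _ ≤ ‖C‖ * (δ⁻¹ * ‖R‖) * ‖T‖ * ((δ ^ 2)⁻¹ * ‖WithLp.toLp 2 (g - g')‖) := by gcongr
    _ = ‖C‖ * ‖R‖ * ‖T‖ / δ ^ 3 * ‖WithLp.toLp 2 (g - g')‖ := by field_simp

theorem stmt13_general {𝕜 : Type*} [RCLike 𝕜] [Fintype l] [DecidableEq n] [DecidableEq p] {δ : ℝ}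
    (hδ : 0 < δ) (C : Matrix l m 𝕜) {R : Matrix m n 𝕜} {T : Matrix p n 𝕜} (hR : ‖R‖ ≤ 1)
    (hT : ‖T‖ ≤ 1) {gR : n → 𝕜} {g g' : p → 𝕜} (hgR : ∀ j, δ ≤ ‖gR j‖) (hg : ∀ i, δ ≤ ‖g i‖)
    (hg' : ∀ i, δ ≤ ‖g' i‖) :
    ‖linearizedGradient C R T gR g - linearizedGradient C R T gR g'‖
      ≤ ‖C‖ / δ ^ 3 * ‖WithLp.toLp 2 (g - g')‖ := by
  refine (frobenius_norm_linearizedGradient_sub_le hδ C R T hgR hg hg').trans ?_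
  gcongr
  rw [mul_assoc]
  exact mul_le_of_le_one_right (norm_nonneg C) (mul_le_one₀ hR (norm_nonneg T) hT)

end Frobenius

/-- Lipschitz bound for the linearized mirror-descent gradient
`C R Xᵀ`, `X = diag(1/g) T diag(1/g_R)`, in the inner marginal `g`, with constant
`‖C‖_F / δ³` on the region where all inner-marginal entries are at least `δ`. -/
theorem stmt13 {n m r₁ r₂ : ℕ} (δ : ℝ) (hδ : 0 < δ)
    (C : Matrix (Fin n) (Fin m) ℝ)
    (R : Matrix (Fin m) (Fin r₂) ℝ) (T : Matrix (Fin r₁) (Fin r₂) ℝ)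
    (hR0 : ∀ j l, 0 ≤ R j l) (hT0 : ∀ k l, 0 ≤ T k l)
    (hRsum : ∑ j, ∑ l, R j l ≤ 1) (hTsum : ∑ k, ∑ l, T k l ≤ 1)
    (g g' : Fin r₁ → ℝ) (gR : Fin r₂ → ℝ)
    (hg : ∀ i, δ ≤ g i) (hg' : ∀ i, δ ≤ g' i) (hgR : ∀ j, δ ≤ gR j) :
    Real.sqrt (∑ i, ∑ k,
        ((C * R * (Matrix.diagonal (fun i => (g i)⁻¹) * T *
            Matrix.diagonal (fun j => (gR j)⁻¹))ᵀ) i k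
          - (C * R * (Matrix.diagonal (fun i => (g' i)⁻¹) * T *
            Matrix.diagonal (fun j => (gR j)⁻¹))ᵀ) i k) ^ 2)
      ≤ Real.sqrt (∑ i, ∑ j, C i j ^ 2) / δ ^ 3 *
        Real.sqrt (∑ i, (g i - g' i) ^ 2) := by
  simpa only [frobenius_norm_eq_sqrt, EuclideanSpace.norm_eq, Real.norm_eq_abs, sq_abs] using!
    stmt13_general hδ C (frobenius_norm_le_one_of_nonneg_of_sum_le_one hR0 hRsum)
      (frobenius_norm_le_one_of_nonneg_of_sum_le_one hT0 hTsum) (hgR · |>.trans (le_abs_self _))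
      (hg · |>.trans (le_abs_self _)) (hg' · |>.trans (le_abs_self _))
end

section
/- Let A ∈ ℝ^{n×n}, let B ∈ ℝ^{m×m} be symmetric, and let P ∈ ℝ^{n×m}. Then the Gromov–Wasserstein quadratic cost satisfies the matrix identity Σ_{i,j,k,l} (A_{ik} − B_{jl})² P_{ij} P_{kl} = 1_mᵀ Pᵀ A^{⊙2} P 1_m + 1_nᵀ P B^{⊙2} Pᵀ 1_n − 2 ⟨A P B, P⟩_F, where A^{⊙2} and B^{⊙2} denote the entrywise (Hadamard) squares. -/
open Matrix

/-!
Expand `(a - b) ^ 2 = a ^ 2 + b ^ 2 - 2 * (a * b)`. In each of the two square terms the loss depends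
on one index of each plan only, so the plans are seen through their marginals; the cross term
factors as a product kernel, and integrating a plan against it is multiplication by `A` and `Bᵀ`.

The identity is bilinear in the pair of plans and is proved in polarized form, for plans `P` and `Q`
between different pairs of spaces, as in co-optimal transport.
-/

theorem mul_mul_apply_eq_sum_sum {R ι ι' κ κ' : Type*} [Fintype ι'] [Fintype κ]
    [NonUnitalNonAssocSemiring R] (A : Matrix ι ι' R) (B : Matrix ι' κ R) (C : Matrix κ κ' R)
    (i : ι) (j : κ') :
    (A * B * C) i j = ∑ k, ∑ l, A i k * B k l * C l j := by
  simp only [mul_apply, Finset.sum_mul]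
  exact Finset.sum_comm

section

variable {R ι ι' κ κ' : Type*} [Fintype ι] [Fintype ι'] [Fintype κ] [Fintype κ']

section CommSemiring

variable [CommSemiring R]

theorem sum_transpose_mul_mul_apply (A : Matrix ι ι' R) (P : Matrix ι κ R) (Q : Matrix ι' κ' R) :
    ∑ j, ∑ l, (Pᵀ * A * Q) j l = ∑ i, ∑ j, ∑ k, ∑ l, A i k * (P i j * Q k l) := by
  calc ∑ j, ∑ l, (Pᵀ * A * Q) j l
      = ∑ j, ∑ l, ∑ i, ∑ k, A i k * (P i j * Q k l) := by
        simp only [mul_mul_apply_eq_sum_sum, transpose_apply, mul_left_comm, mul_assoc]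
    _ = ∑ j, ∑ i, ∑ k, ∑ l, A i k * (P i j * Q k l) :=
        Finset.sum_congr rfl fun _ _ => Finset.sum_comm_cycle.symm
    _ = ∑ i, ∑ j, ∑ k, ∑ l, A i k * (P i j * Q k l) := Finset.sum_comm

theorem sum_mul_mul_transpose_apply (B : Matrix κ κ' R) (P : Matrix ι κ R) (Q : Matrix ι' κ' R) :
    ∑ i, ∑ k, (P * B * Qᵀ) i k = ∑ i, ∑ j, ∑ k, ∑ l, B j l * (P i j * Q k l) := by
  calc ∑ i, ∑ k, (P * B * Qᵀ) i k
      = ∑ i, ∑ k, ∑ j, ∑ l, B j l * (P i j * Q k l) := by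
        simp only [mul_mul_apply_eq_sum_sum, transpose_apply, mul_left_comm, mul_assoc]
    _ = ∑ i, ∑ j, ∑ k, ∑ l, B j l * (P i j * Q k l) :=
        Finset.sum_congr rfl fun _ _ => Finset.sum_comm

theorem sum_mul_mul_transpose_apply_mul_apply (A : Matrix ι ι' R) (B : Matrix κ κ' R)
    (P : Matrix ι κ R) (Q : Matrix ι' κ' R) :
    ∑ i, ∑ j, (A * Q * Bᵀ) i j * P i j
      = ∑ i, ∑ j, ∑ k, ∑ l, A i k * B j l * (P i j * Q k l) := by
  simp only [mul_mul_apply_eq_sum_sum, transpose_apply, Finset.sum_mul]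
  simp only [mul_comm, mul_left_comm]

end CommSemiring

theorem stmt14_general [CommRing R] (A : Matrix ι ι' R) (B : Matrix κ κ' R)
    (P : Matrix ι κ R) (Q : Matrix ι' κ' R) :
    ∑ i, ∑ j, ∑ k, ∑ l, (A i k - B j l) ^ 2 * (P i j * Q k l)
      = (∑ j, ∑ l, (Pᵀ * A.map (fun t => t ^ 2) * Q) j l)
        + (∑ i, ∑ k, (P * B.map (fun t => t ^ 2) * Qᵀ) i k)
        - 2 * ∑ i, ∑ j, (A * Q * Bᵀ) i j * P i j := by
  have expand (a b p : R) :
      (a - b) ^ 2 * p = a ^ 2 * p + b ^ 2 * p - 2 * (a * b * p) := by ring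
  simp only [expand, sum_transpose_mul_mul_apply, sum_mul_mul_transpose_apply,
    sum_mul_mul_transpose_apply_mul_apply, map_apply, Finset.sum_add_distrib,
    Finset.sum_sub_distrib, Finset.mul_sum]

end

/-- Matrix form of the Gromov–Wasserstein quadratic cost:
`Σ (A_{ik} − B_{jl})² P_{ij} P_{kl}
  = 1ᵀ Pᵀ A^{⊙2} P 1 + 1ᵀ P B^{⊙2} Pᵀ 1 − 2 ⟨A P B, P⟩_F` for symmetric `B`. -/
theorem stmt14 {n m : ℕ} (A : Matrix (Fin n) (Fin n) ℝ) (B : Matrix (Fin m) (Fin m) ℝ)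
    (hB : B.IsSymm) (P : Matrix (Fin n) (Fin m) ℝ) :
    ∑ i, ∑ j, ∑ k, ∑ l, (A i k - B j l) ^ 2 * (P i j * P k l)
      = (∑ j, ∑ l, (Pᵀ * A.map (fun t => t ^ 2) * P) j l)
        + (∑ i, ∑ k, (P * B.map (fun t => t ^ 2) * Pᵀ) i k)
        - 2 * ∑ i, ∑ j, (A * P * B) i j * P i j := by
  simpa only [hB.eq] using stmt14_general A B P P
end

section
/- Let A ∈ ℝ^{n×n}, let B ∈ ℝ^{m×m} be symmetric, and let Q ∈ ℝ^{n×r_1}, R ∈ ℝ^{m×r_2}, X ∈ ℝ^{r_1×r_2} satisfy X (Rᵀ 1_m) = 1_{r_1} and Xᵀ (Qᵀ 1_n) = 1_{r_2}. Then for P = Q X Rᵀ the Gromov–Wasserstein quadratic cost reduces to Σ_{i,j,k,l} (A_{ik} − B_{jl})² P_{ij} P_{kl} = 1_{r_1}ᵀ Qᵀ A^{⊙2} Q 1_{r_1} + 1_{r_2}ᵀ Rᵀ B^{⊙2} R 1_{r_2} − 2 ⟨Q X Rᵀ, A Q X Rᵀ B⟩_F. -/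
open Matrix

/-
Expanding `(a - b) ^ 2 = a ^ 2 * 1 + 1 * b ^ 2 - 2 * (a * b)` splits the cost into three sums with
separable kernels `M i k * N j l`, and such a sum is the Frobenius inner product of `P` with
`M * P * Nᵀ`. When `M` or `N` is the all-ones matrix, only a marginal of `P` survives; the coupling
constraints say that the marginals of `Q * X * Rᵀ` are those of `Q` and `R`, so `X` disappears from
the first two terms.
-/

section SeparableKernels

variable {n n' m m' α : Type*} [Fintype n] [Fintype n'] [Fintype m] [Fintype m'] [CommSemiring α]

theorem sum_mul_vecMulVec (P : Matrix n m α) (u : n → α) (v : m → α) :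
    ∑ i, ∑ j, P i j * vecMulVec u v i j = u ⬝ᵥ P *ᵥ v := by
  simp only [dotProduct, mulVec, vecMulVec_apply, Finset.mul_sum, mul_left_comm]

theorem sum_separable_kernel_eq_frobenius (M : Matrix n n' α) (N : Matrix m m' α)
    (P : Matrix n m α) (P' : Matrix n' m' α) :
    ∑ i, ∑ j, ∑ k, ∑ l, M i k * N j l * (P i j * P' k l)
      = ∑ i, ∑ j, P i j * (M * P' * Nᵀ) i j := by
  refine Finset.sum_congr rfl fun i _ => Finset.sum_congr rfl fun j _ => ?_
  simp only [mul_apply, transpose_apply, Finset.sum_mul, Finset.mul_sum]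
  rw [Finset.sum_comm]
  refine Finset.sum_congr rfl fun l _ => Finset.sum_congr rfl fun k _ => ?_
  ring

theorem sum_left_kernel_eq_row_marginals (M : Matrix n n' α) (P : Matrix n m α)
    (P' : Matrix n' m' α) :
    ∑ i, ∑ j, ∑ k, ∑ l, M i k * (P i j * P' k l) = (P *ᵥ 1) ⬝ᵥ M *ᵥ (P' *ᵥ 1) := by
  calc ∑ i, ∑ j, ∑ k, ∑ l, M i k * (P i j * P' k l)
      = ∑ i, ∑ j, P i j * (M * P' * (vecMulVec (1 : m → α) (1 : m' → α))ᵀ) i j := by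
        simp only [← sum_separable_kernel_eq_frobenius, vecMulVec_apply, Pi.one_apply, mul_one]
    _ = (M *ᵥ (P' *ᵥ 1)) ⬝ᵥ P *ᵥ 1 := by
        rw [transpose_vecMulVec, mul_vecMulVec, ← mulVec_mulVec, sum_mul_vecMulVec]
    _ = (P *ᵥ 1) ⬝ᵥ M *ᵥ (P' *ᵥ 1) := dotProduct_comm _ _

theorem sum_right_kernel_eq_col_marginals (N : Matrix m m' α) (P : Matrix n m α)
    (P' : Matrix n' m' α) :
    ∑ i, ∑ j, ∑ k, ∑ l, N j l * (P i j * P' k l) = (Pᵀ *ᵥ 1) ⬝ᵥ N *ᵥ (P'ᵀ *ᵥ 1) := by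
  calc ∑ i, ∑ j, ∑ k, ∑ l, N j l * (P i j * P' k l)
      = ∑ i, ∑ j, P i j * (vecMulVec (1 : n → α) (1 : n' → α) * P' * Nᵀ) i j := by
        simp only [← sum_separable_kernel_eq_frobenius, vecMulVec_apply, Pi.one_apply, one_mul]
    _ = 1 ⬝ᵥ P *ᵥ (N *ᵥ (P'ᵀ *ᵥ 1)) := by
        rw [vecMulVec_mul, vecMulVec_mul, sum_mul_vecMulVec, vecMul_transpose, mulVec_transpose]
    _ = (Pᵀ *ᵥ 1) ⬝ᵥ N *ᵥ (P'ᵀ *ᵥ 1) := by rw [dotProduct_mulVec, mulVec_transpose P]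

end SeparableKernels

section Factorization

variable {n m r₁ r₂ α : Type*}

theorem mul_mul_mulVec_of_mulVec_eq [Fintype m] [Fintype r₁] [Fintype r₂] [NonUnitalSemiring α]
    (Q : Matrix n r₁ α) {X : Matrix r₁ r₂ α} {S : Matrix r₂ m α} {v : m → α} {w : r₁ → α}
    (h : X *ᵥ (S *ᵥ v) = w) :
    (Q * X * S) *ᵥ v = Q *ᵥ w := by
  rw [← mulVec_mulVec, ← mulVec_mulVec, h]

theorem sum_sum_eq_one_dotProduct_mulVec_one [Fintype n] [Fintype m] [NonAssocSemiring α]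
    (M : Matrix n m α) :
    ∑ i, ∑ j, M i j = 1 ⬝ᵥ M *ᵥ 1 := by
  simp only [one_dotProduct, mulVec, dotProduct_one]

theorem sum_transpose_mul_mul [Fintype n] [Fintype m] [Fintype r₁] [Fintype r₂] [CommSemiring α]
    (Q : Matrix n r₁ α) (C : Matrix n m α) (R : Matrix m r₂ α) :
    ∑ s, ∑ t, (Qᵀ * C * R) s t = (Q *ᵥ 1) ⬝ᵥ C *ᵥ (R *ᵥ 1) := by
  rw [sum_sum_eq_one_dotProduct_mulVec_one, ← mulVec_mulVec, ← mulVec_mulVec, dotProduct_mulVec,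
    vecMul_transpose]

end Factorization

section GromovWasserstein

variable {n m r₁ r₂ α : Type*} [Fintype n] [Fintype m] [Fintype r₁] [Fintype r₂]

/-- The Gromov–Wasserstein quadratic cost `Q_{A,B}(P)` of `P` with respect to `A` and `B`; no
marginal or sign condition is imposed on `P`. -/
def gromovWassersteinCost [Ring α] (A : Matrix n n α) (B : Matrix m m α) (P : Matrix n m α) : α :=
  ∑ i, ∑ j, ∑ k, ∑ l, (A i k - B j l) ^ 2 * (P i j * P k l)

theorem gromovWassersteinCost_eq_marginals [CommRing α] (A : Matrix n n α)
    (B : Matrix m m α) (P : Matrix n m α) :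
    gromovWassersteinCost A B P
      = (P *ᵥ 1) ⬝ᵥ A.map (fun u => u ^ 2) *ᵥ (P *ᵥ 1)
        + (Pᵀ *ᵥ 1) ⬝ᵥ B.map (fun u => u ^ 2) *ᵥ (Pᵀ *ᵥ 1)
        - 2 * ∑ i, ∑ j, P i j * (A * P * Bᵀ) i j := by
  have expand_sq (i k : n) (j l : m) : (A i k - B j l) ^ 2 * (P i j * P k l)
      = A i k ^ 2 * (P i j * P k l) + B j l ^ 2 * (P i j * P k l)
        - 2 * (A i k * B j l * (P i j * P k l)) := by ring
  rw [← sum_left_kernel_eq_row_marginals, ← sum_right_kernel_eq_col_marginals,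
    ← sum_separable_kernel_eq_frobenius]
  simp only [gromovWassersteinCost, expand_sq, map_apply, Finset.sum_sub_distrib,
    Finset.sum_add_distrib, Finset.mul_sum]

theorem stmt15_general [CommRing α] (A : Matrix n n α) (B : Matrix m m α)
    (Q : Matrix n r₁ α) (R : Matrix m r₂ α) (X : Matrix r₁ r₂ α)
    (hX1 : X *ᵥ (Rᵀ *ᵥ 1) = 1) (hX2 : Xᵀ *ᵥ (Qᵀ *ᵥ 1) = 1) :
    gromovWassersteinCost A B (Q * X * Rᵀ)
      = (∑ s, ∑ t, (Qᵀ * A.map (fun u => u ^ 2) * Q) s t)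
        + (∑ s, ∑ t, (Rᵀ * B.map (fun u => u ^ 2) * R) s t)
        - 2 * ∑ i, ∑ j, (Q * X * Rᵀ) i j * (A * (Q * X * Rᵀ) * Bᵀ) i j := by
  have row_marginal : (Q * X * Rᵀ) *ᵥ 1 = Q *ᵥ 1 := mul_mul_mulVec_of_mulVec_eq Q hX1
  have col_marginal : (Q * X * Rᵀ)ᵀ *ᵥ 1 = R *ᵥ 1 := by
    rw [transpose_mul, transpose_mul, transpose_transpose, ← Matrix.mul_assoc]
    exact mul_mul_mulVec_of_mulVec_eq R hX2
  rw [gromovWassersteinCost_eq_marginals, row_marginal, col_marginal, sum_transpose_mul_mul,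
    sum_transpose_mul_mul]

end GromovWasserstein

/-- Under the latent-coupling constraints `X (Rᵀ 1) = 1` and `Xᵀ (Qᵀ 1) = 1`,
the Gromov–Wasserstein quadratic cost of `P = Q X Rᵀ` reduces to
`1ᵀ Qᵀ A^{⊙2} Q 1 + 1ᵀ Rᵀ B^{⊙2} R 1 − 2 ⟨Q X Rᵀ, A Q X Rᵀ B⟩_F`. -/
theorem stmt15 {n m r₁ r₂ : ℕ} (A : Matrix (Fin n) (Fin n) ℝ)
    (B : Matrix (Fin m) (Fin m) ℝ) (hB : B.IsSymm)
    (Q : Matrix (Fin n) (Fin r₁) ℝ) (R : Matrix (Fin m) (Fin r₂) ℝ)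
    (X : Matrix (Fin r₁) (Fin r₂) ℝ)
    (hX1 : X *ᵥ (Rᵀ *ᵥ (fun _ => 1)) = fun _ => 1)
    (hX2 : Xᵀ *ᵥ (Qᵀ *ᵥ (fun _ => 1)) = fun _ => 1) :
    ∑ i, ∑ j, ∑ k, ∑ l, (A i k - B j l) ^ 2 *
        ((Q * X * Rᵀ) i j * (Q * X * Rᵀ) k l)
      = (∑ s, ∑ t, (Qᵀ * A.map (fun u => u ^ 2) * Q) s t)
        + (∑ s, ∑ t, (Rᵀ * B.map (fun u => u ^ 2) * R) s t)
        - 2 * ∑ i, ∑ j, (Q * X * Rᵀ) i j * (A * (Q * X * Rᵀ) * B) i j := by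
  simpa only [gromovWassersteinCost, hB.eq] using stmt15_general A B Q R X hX1 hX2
end

section
/- Let K ∈ ℝ^{n×m} be entrywise positive and let a ∈ ℝ^n be entrywise positive. Then the matrix P* = diag(a / (K 1_m)) · K (where division is entrywise) satisfies P* 1_m = a and minimizes the generalized Kullback–Leibler divergence KL(P ∥ K) = Σ_{ij} [P_{ij} log(P_{ij}/K_{ij}) − P_{ij} + K_{ij}] over all entrywise-nonnegative matrices P ∈ ℝ^{n×m} with P 1_m = a (with the convention 0·log 0 = 0). -/
open Matrix

/-- The generalized Kullback–Leibler divergence between two matrices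
(with the convention `0 · log 0 = 0`, automatic since `Real.log 0 = 0`). -/
noncomputable def matKL {n m : ℕ} (P K : Matrix (Fin n) (Fin m) ℝ) : ℝ :=
  ∑ i, ∑ j, (P i j * Real.log (P i j / K i j) - P i j + K i j)

/-!
`KL(P ∥ K)` is the `f`-divergence with `f x = x log x + 1 - x`: row by row, a `K`-weighted sum of
values of a convex function at the ratios `P i j / K i j`. Jensen's inequality bounds the `i`-th row
below by `(∑ j, K i j) * f (a i / ∑ j, K i j)`, which depends on `P` only through its row sum; the
bound is attained when the ratios are constant along the row.
-/

open InformationTheory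

/-- The Csiszár `f`-divergence `∑ i j, K i j * f (P i j / K i j)` of matrices, meant for entrywise
positive `K`: a zero entry of `K` contributes `0`, whatever the entry of `P`. -/
noncomputable def matFDiv {ι κ : Type*} [Fintype ι] [Fintype κ] (f : ℝ → ℝ) (P K : Matrix ι κ ℝ) :
    ℝ :=
  ∑ i, ∑ j, K i j * f (P i j / K i j)

/-- The matrix `diag(a / (K 1)) K`, obtained by rescaling each row of `K` so that the row sums
become `a`. A row of `K` with sum `0` is sent to `0`, whatever `a`. -/
noncomputable def rowScaling {ι κ : Type*} [Fintype ι] [DecidableEq ι] [Fintype κ] (a : ι → ℝ)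
    (K : Matrix ι κ ℝ) : Matrix ι κ ℝ :=
  diagonal (fun i => a i / ∑ j, K i j) * K

lemma sum_mul_map_sum_div_sum_le {κ : Type*} {s : Finset κ} {S : Set ℝ} {f : ℝ → ℝ}
    (hf : ConvexOn ℝ S f) {p w : κ → ℝ} (hw : ∀ j ∈ s, 0 < w j) (hp : ∀ j ∈ s, p j / w j ∈ S) :
    (∑ j ∈ s, w j) * f ((∑ j ∈ s, p j) / ∑ j ∈ s, w j) ≤ ∑ j ∈ s, w j * f (p j / w j) := by
  obtain rfl | hs := s.eq_empty_or_nonempty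
  · simp
  have hW : 0 < ∑ j ∈ s, w j := Finset.sum_pos hw hs
  have mean_ratio : s.centerMass w (fun j => p j / w j) = (∑ j ∈ s, p j) / ∑ j ∈ s, w j := by
    rw [Finset.centerMass, smul_eq_mul, inv_mul_eq_div]
    congr 1
    exact Finset.sum_congr rfl fun j hj => mul_div_cancel₀ (p j) (hw j hj).ne'
  have jensen := hf.map_centerMass_le (fun j hj => (hw j hj).le) hW hp
  rw [mean_ratio, Finset.centerMass, smul_eq_mul, inv_mul_eq_div, le_div_iff₀' hW] at jensen
  exact jensen

section RowScaling

variable {ι κ : Type*} [Fintype ι] [DecidableEq ι] [Fintype κ] {K : Matrix ι κ ℝ}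

lemma rowScaling_apply (a : ι → ℝ) (K : Matrix ι κ ℝ) (i : ι) (j : κ) :
    rowScaling a K i j = (a i / ∑ j', K i j') * K i j :=
  diagonal_mul _ _ _ _

lemma sum_rowScaling (a : ι → ℝ) {i : ι} (hK : ∑ j, K i j ≠ 0) :
    ∑ j, rowScaling a K i j = a i := by
  simp only [rowScaling_apply, ← Finset.mul_sum, div_mul_cancel₀ _ hK]

lemma matFDiv_rowScaling (f : ℝ → ℝ) (a : ι → ℝ) (hK : ∀ i j, K i j ≠ 0) :
    matFDiv f (rowScaling a K) K = ∑ i, (∑ j, K i j) * f (a i / ∑ j, K i j) := by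
  simp only [matFDiv, rowScaling_apply, mul_div_cancel_right₀ _ (hK _ _), Finset.sum_mul]

lemma matFDiv_rowScaling_sum_le {f : ℝ → ℝ} (hf : ConvexOn ℝ (Set.Ici 0) f) {P : Matrix ι κ ℝ}
    (hK : ∀ i j, 0 < K i j) (hP : ∀ i j, 0 ≤ P i j) :
    matFDiv f (rowScaling (fun i => ∑ j, P i j) K) K ≤ matFDiv f P K := by
  rw [matFDiv_rowScaling f _ fun i j => (hK i j).ne']
  exact Finset.sum_le_sum fun i _ => sum_mul_map_sum_div_sum_le hf (fun j _ => hK i j)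
    fun j _ => div_nonneg (hP i j) (hK i j).le

theorem stmt18_general [Nonempty κ] {f : ℝ → ℝ} (hf : ConvexOn ℝ (Set.Ici 0) f)
    (hK : ∀ i j, 0 < K i j) (a : ι → ℝ) :
    (∀ i, ∑ j, rowScaling a K i j = a i) ∧
    ∀ P : Matrix ι κ ℝ, (∀ i j, 0 ≤ P i j) → (∀ i, ∑ j, P i j = a i) →
      matFDiv f (rowScaling a K) K ≤ matFDiv f P K := by
  refine ⟨fun i => sum_rowScaling a ?_, fun P hP hPa => ?_⟩
  · exact (Finset.sum_pos (fun j _ => hK i j) Finset.univ_nonempty).ne'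
  · obtain rfl : (fun i => ∑ j, P i j) = a := funext hPa
    exact matFDiv_rowScaling_sum_le hf hK hP

end RowScaling

lemma mul_klFun_div (p : ℝ) {k : ℝ} (hk : k ≠ 0) :
    k * klFun (p / k) = p * Real.log (p / k) - p + k := by
  rw [klFun_apply]
  field_simp
  ring

lemma matKL_eq_matFDiv_klFun {n m : ℕ} (P : Matrix (Fin n) (Fin m) ℝ)
    {K : Matrix (Fin n) (Fin m) ℝ} (hK : ∀ i j, K i j ≠ 0) : matKL P K = matFDiv klFun P K := by
  simp only [matKL, matFDiv, mul_klFun_div _ (hK _ _)]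

/-- `P* = diag(a / (K 1)) K` satisfies the row-marginal constraint
`P* 1 = a` and minimizes `KL(P ∥ K)` over all entrywise-nonnegative `P` with `P 1 = a`. -/
theorem stmt18 {n m : ℕ} (hm : 0 < m)
    (K : Matrix (Fin n) (Fin m) ℝ) (hK : ∀ i j, 0 < K i j)
    (a : Fin n → ℝ) (ha : ∀ i, 0 < a i) :
    (∀ i, ∑ j, (Matrix.diagonal (fun i' => a i' / ∑ j', K i' j') * K) i j = a i) ∧
    (∀ P : Matrix (Fin n) (Fin m) ℝ, (∀ i j, 0 ≤ P i j) → (∀ i, ∑ j, P i j = a i) →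
      matKL (Matrix.diagonal (fun i' => a i' / ∑ j', K i' j') * K) K ≤ matKL P K) := by
  have : Nonempty (Fin m) := ⟨⟨0, hm⟩⟩
  simp only [matKL_eq_matFDiv_klFun _ fun i j => (hK i j).ne']
  exact stmt18_general convexOn_klFun hK a
end
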